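/- arXiv:1910.12683 — 3 statements merged into one kernel-verified Lean document; each statement's English description precedes it below -/
import Mathlib

section
/- Let N ⊴ G be a normal subgroup of a finite group G and suppose χ ∈ Irr(G) has degree χ(1) relatively prime to the index [G : N]. Then the restriction χ_N is irreducible. -/
open scoped Classical

noncomputable section

/-- The inner product of two class functions on a finite group. -/
def cdot (G : Type*) [Group G] [Finite G] (f h : G → ℂ) : ℂ :=
  (Nat.card G : ℂ)⁻¹ * ∑ᶠ g : G, f g * (starRingEnd ℂ) (h g)

/-- `f` is the character of a finite-dimensional complex representation of `G`. -/
def IsChar (G : Type*) [Group G] (f : G → ℂ) : Prop :=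
  ∃ (n : ℕ) (ρ : G →* Matrix.GeneralLinearGroup (Fin n) ℂ),
    f = fun g => Matrix.trace ((ρ g : Matrix (Fin n) (Fin n) ℂ))

/-- `f` is a linear (degree one) character of `G`. -/
def IsLinearChar (G : Type*) [Group G] (f : G → ℂ) : Prop :=
  ∃ ρ : G →* ℂˣ, f = fun g => (ρ g : ℂ)

/-- `f` is an irreducible character of `G`: a character of norm one. -/
def IsIrrChar (G : Type*) [Group G] [Finite G] (f : G → ℂ) : Prop :=
  IsChar G f ∧ cdot G f f = 1

/-- The class function on `G` induced from a class function on a subgroup `H`. -/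
def ind {G : Type*} [Group G] [Finite G] (H : Subgroup G) (f : H → ℂ) : G → ℂ :=
  fun g => (Nat.card H : ℂ)⁻¹ *
    ∑ᶠ x : G, if h : x * g * x⁻¹ ∈ H then f ⟨x * g * x⁻¹, h⟩ else 0

/-- Restriction of a class function on `G` to a subgroup `H`. -/
def res {G : Type*} [Group G] (H : Subgroup G) (f : G → ℂ) : H → ℂ := fun x => f x

/-- Restriction of a class function on a subgroup `K` to a smaller subgroup `H ≤ K`. -/
def resTo {G : Type*} [Group G] {K H : Subgroup G} (hHK : H ≤ K) (f : K → ℂ) : H → ℂ :=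
  fun x => f ⟨x.1, hHK x.2⟩

/-- Induction of a class function from a subgroup `H` to a larger subgroup `K`. -/
def indTo {G : Type*} [Group G] [Finite G] (K H : Subgroup G) (f : H → ℂ) : K → ℂ :=
  ind (H.subgroupOf K) fun y => f ⟨y.1.1, Subgroup.mem_subgroupOf.mp y.2⟩

/-- `G` is almost monomial. -/
def IsAlmostMonomial (G : Type*) [Group G] [Finite G] : Prop :=
  ∀ χ φ : G → ℂ, IsIrrChar G χ → IsIrrChar G φ → χ ≠ φ →
    ∃ (H : Subgroup G) (l : H → ℂ), IsLinearChar H l ∧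
      cdot G (ind H l) χ ≠ 0 ∧ cdot G (ind H l) φ = 0

/-- `G` is relative almost monomial with respect to the (normal) subgroup `N`. -/
def IsRelAlmostMonomial (G : Type*) [Group G] [Finite G] (N : Subgroup G) : Prop :=
  ∀ χ φ : G → ℂ, IsIrrChar G χ → IsIrrChar G φ → χ ≠ φ →
    ∃ (H : Subgroup G) (hNH : N ≤ H) (ψ : H → ℂ), IsIrrChar H ψ ∧
      IsIrrChar N (resTo hNH ψ) ∧
      cdot G (ind H ψ) χ ≠ 0 ∧ cdot G (ind H ψ) φ = 0

/-- `H` is a subnormal subgroup of `G`. -/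
def IsSubnormalSubgroup (G : Type*) [Group G] (H : Subgroup G) : Prop :=
  ∃ (n : ℕ) (c : Fin (n + 1) → Subgroup G), c 0 = H ∧ c (Fin.last n) = ⊤ ∧
    ∀ i : Fin n, ((c i.castSucc).subgroupOf (c i.succ)).Normal

/-- `G` is normally almost monomial. -/
def IsNormallyAlmostMonomial (G : Type*) [Group G] [Finite G] : Prop :=
  ∀ χ φ : G → ℂ, IsIrrChar G χ → IsIrrChar G φ → χ ≠ φ →
    ∃ (H : Subgroup G), H.Normal ∧ ∃ l : H → ℂ, IsLinearChar H l ∧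
      cdot G (ind H l) χ ≠ 0 ∧ cdot G (ind H l) φ = 0

/-- `G` is subnormally almost monomial. -/
def IsSubnormallyAlmostMonomial (G : Type*) [Group G] [Finite G] : Prop :=
  ∀ χ φ : G → ℂ, IsIrrChar G χ → IsIrrChar G φ → χ ≠ φ →
    ∃ (H : Subgroup G), IsSubnormalSubgroup G H ∧ ∃ l : H → ℂ, IsLinearChar H l ∧
      cdot G (ind H l) χ ≠ 0 ∧ cdot G (ind H l) φ = 0

/-- `G` is quasi-monomial. -/
def IsQuasiMonomial (G : Type*) [Group G] [Finite G] : Prop :=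
  ∀ χ : G → ℂ, IsIrrChar G χ → ∃ (H : Subgroup G) (l : H → ℂ) (d : ℕ),
    IsLinearChar H l ∧ 1 ≤ d ∧ ind H l = fun g => (d : ℂ) * χ g

/-- The set of irreducible characters of `G`. -/
def IrrSet (G : Type*) [Group G] [Finite G] : Set (G → ℂ) := {χ | IsIrrChar G χ}

/-- `f` belongs to the semigroup `M(G)` generated by monomial characters. -/
def InMG (G : Type*) [Group G] [Finite G] (f : G → ℂ) : Prop :=
  ∃ (k : ℕ) (H : Fin (k + 1) → Subgroup G) (l : ∀ i, (H i) → ℂ),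
    (∀ i, IsLinearChar (H i) (l i)) ∧ f = fun g => ∑ i, ind (H i) (l i) g

/-- The set of irreducible constituents of a class function `f`. -/
def Cons (G : Type*) [Group G] [Finite G] (f : G → ℂ) : Set (G → ℂ) :=
  {φ | IsIrrChar G φ ∧ cdot G φ f ≠ 0}

/-- `L_t(G)`: the number of constituent-sets of size `t` of characters in `M(G)`. -/
def Lt (G : Type*) [Group G] [Finite G] (t : ℕ) : ℕ :=
  Nat.card {S : Set (G → ℂ) // ∃ f, InMG G f ∧ Cons G f = S ∧ Nat.card S = t}

end

theorem dvd_of_isIntegral_of_mul_eq {x : ℂ} (hx : IsIntegral ℤ x) {m n : ℕ} (hm : m ≠ 0)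
    (h : (m : ℂ) * x = n) : m ∣ n := by
  have hm' : (m : ℂ) ≠ 0 := Nat.cast_ne_zero.mpr hm
  have hxq : x = algebraMap ℚ ℂ ((n : ℚ) / m) := by
    simp only [map_div₀, map_natCast]
    field_simp
    linear_combination h
  rw [hxq, isIntegral_algebraMap_iff (algebraMap ℚ ℂ).injective,
    IsIntegrallyClosed.isIntegral_iff] at hx
  obtain ⟨y, hy⟩ := hx
  have hmq : (m : ℚ) ≠ 0 := Nat.cast_ne_zero.mpr hm
  have hy' : (y : ℚ) = n / m := by simpa using hy
  rw [eq_div_iff hmq] at hy'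
  have hz : y * m = n := by exact_mod_cast hy'
  exact Int.natCast_dvd_natCast.mp ⟨y, by rw [← hz, mul_comm]⟩

theorem isIntegral_of_coprime_mul {s : ℂ} {m n : ℕ} (hmn : m.Coprime n)
    (hm : IsIntegral ℤ ((m : ℂ) * s)) (hn : IsIntegral ℤ ((n : ℂ) * s)) : IsIntegral ℤ s := by
  obtain ⟨a, b, hab⟩ := Nat.isCoprime_iff_coprime.mpr hmn
  have hs : s = a • ((m : ℂ) * s) + b • ((n : ℂ) * s) := by
    have : (a : ℂ) * m + b * n = 1 := by exact_mod_cast hab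
    simp only [zsmul_eq_mul]
    linear_combination (-s) * this
  rw [hs]
  exact (hm.smul a).add (hn.smul b)

theorem Matrix.isIntegral_trace {n : Type*} [Fintype n] [DecidableEq n] {A : Matrix n n ℂ}
    (hA : IsIntegral ℤ A) : IsIntegral ℤ A.trace := by
  rw [Matrix.trace_eq_sum_roots_charpoly]
  refine IsIntegral.multiset_sum fun r hr => ?_
  have hr' : r ∈ spectrum ℂ A :=
    Matrix.mem_spectrum_iff_isRoot_charpoly.mpr (Polynomial.isRoot_of_mem_roots hr)
  obtain ⟨p, hp, hpA⟩ := hA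
  refine ⟨p, hp, ?_⟩
  have h := spectrum.subset_polynomial_aeval A (p.map (algebraMap ℤ ℂ)) ⟨r, hr', rfl⟩
  rw [Polynomial.aeval_map_algebraMap, Polynomial.aeval_def, hpA] at h
  rcases isEmpty_or_nonempty n with hn | hn
  · simp [spectrum.of_subsingleton] at h
  · rw [spectrum.zero_eq] at h
    simpa [Polynomial.eval_map] using h

theorem Matrix.trace_mul_trace_eq_sum {n : Type*} [Fintype n] [DecidableEq n]
    (A B : Matrix n n ℂ) :
    A.trace * B.trace = ∑ i, ∑ j, (A * (Matrix.single i j 1 : Matrix n n ℂ) * B) i j := by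
  simp [Matrix.trace, Finset.sum_mul_sum, Matrix.mul_apply, Matrix.single_apply, ite_and]

section ProjectiveRepresentation

variable {H : Type*} {e : ℕ}
  {w : H → Matrix.SpecialLinearGroup (Fin e) ℂ}

/-- The span of the lift over the algebraic integers. -/
def IsUnimodularLift.order (w : H → Matrix.SpecialLinearGroup (Fin e) ℂ) :
    Submodule (integralClosure ℤ ℂ) (Matrix (Fin e) (Fin e) ℂ) :=
  Submodule.span _ (Set.range fun x => (w x : Matrix (Fin e) (Fin e) ℂ))

theorem IsUnimodularLift.smul_mem_order (he : e ≠ 0) {c : ℂ} (hc : c ^ e = 1) {b : Matrix (Fin e) (Fin e) ℂ}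
    (hb : b ∈ order w) : c • b ∈ order w :=
  (order w).smul_mem (⟨c, IsIntegral.of_pow (Nat.pos_of_ne_zero he) (hc ▸ isIntegral_one)⟩ :
    integralClosure ℤ ℂ) hb

variable [Group H]

/-- The multiplier of a determinant-one lift takes values in the `e`-th roots of unity. -/
def IsUnimodularLift (w : H → Matrix.SpecialLinearGroup (Fin e) ℂ) : Prop :=
  ∀ x y, ∃ c : ℂ, c ^ e = 1 ∧
    (w x : Matrix (Fin e) (Fin e) ℂ) * (w y : Matrix (Fin e) (Fin e) ℂ) =
      c • (w (x * y) : Matrix (Fin e) (Fin e) ℂ)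

namespace IsUnimodularLift

theorem map_one (hw : IsUnimodularLift w) :
    ∃ c : ℂ, c ^ e = 1 ∧ (w 1 : Matrix (Fin e) (Fin e) ℂ) = c • 1 := by
  obtain ⟨c, hc, h⟩ := hw 1 1
  refine ⟨c, hc, ?_⟩
  have h1 : (w 1 : Matrix (Fin e) (Fin e) ℂ) * ((w 1)⁻¹ : Matrix.SpecialLinearGroup (Fin e) ℂ)
      = 1 := by rw [← Matrix.SpecialLinearGroup.coe_mul]; simp
  have := congrArg (· * (((w 1)⁻¹ : Matrix.SpecialLinearGroup (Fin e) ℂ) :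
    Matrix (Fin e) (Fin e) ℂ)) h
  simpa only [mul_one, mul_assoc, h1, smul_mul_assoc] using this

theorem coe_inv (hw : IsUnimodularLift w) (he : e ≠ 0) (x : H) :
    ∃ c : ℂ, c ^ e = 1 ∧
      (((w x)⁻¹ : Matrix.SpecialLinearGroup (Fin e) ℂ) : Matrix (Fin e) (Fin e) ℂ) =
        c • (w x⁻¹ : Matrix (Fin e) (Fin e) ℂ) := by
  obtain ⟨c₁, hc₁, h₁⟩ := hw.map_one
  obtain ⟨c, hc, h⟩ := hw x x⁻¹
  have hne : c * c₁ ≠ 0 := by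
    intro h0
    have := mul_pow c c₁ e
    simp [h0, hc, hc₁, he] at this
  refine ⟨(c * c₁)⁻¹, by rw [inv_pow, mul_pow, hc, hc₁]; simp, ?_⟩
  have hinv : (((w x)⁻¹ : Matrix.SpecialLinearGroup (Fin e) ℂ) : Matrix (Fin e) (Fin e) ℂ)
      * w x = 1 := by rw [← Matrix.SpecialLinearGroup.coe_mul]; simp
  rw [mul_inv_cancel, h₁, smul_smul] at h
  have := congrArg ((((w x)⁻¹ : Matrix.SpecialLinearGroup (Fin e) ℂ) :
    Matrix (Fin e) (Fin e) ℂ) * ·) h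
  simp only [← mul_assoc, hinv, one_mul, mul_smul_comm, mul_one] at this
  rw [this, smul_smul, inv_mul_cancel₀ hne, one_smul]

theorem exists_pow_eq (hw : IsUnimodularLift w) (x : H) (k : ℕ) :
    ∃ c : ℂ, c ^ e = 1 ∧
      (w x : Matrix (Fin e) (Fin e) ℂ) ^ k = c • (w (x ^ k) : Matrix (Fin e) (Fin e) ℂ) := by
  induction k with
  | zero =>
    obtain ⟨c, hc, h⟩ := hw.map_one
    refine ⟨c⁻¹, by simp [hc], ?_⟩
    rcases eq_or_ne c 0 with rfl | h0
    · rcases eq_or_ne e 0 with rfl | he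
      · exact Subsingleton.elim _ _
      · simp [he] at hc
    · rw [pow_zero, pow_zero, h, smul_smul, inv_mul_cancel₀ h0, one_smul]
  | succ k ih =>
    obtain ⟨c, hc, h⟩ := ih
    obtain ⟨c', hc', h'⟩ := hw (x ^ k) x
    exact ⟨c * c', by rw [mul_pow, hc, hc', one_mul],
      by rw [pow_succ, h, smul_mul_assoc, h', smul_smul, pow_succ]⟩

theorem isIntegral [Finite H] (hw : IsUnimodularLift w) (he : e ≠ 0) (x : H) :
    IsIntegral ℤ (w x : Matrix (Fin e) (Fin e) ℂ) := by
  obtain ⟨c, hc, h⟩ := hw.exists_pow_eq x (Nat.card H)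
  obtain ⟨c₁, hc₁, h₁⟩ := hw.map_one
  refine IsIntegral.of_pow (n := Nat.card H * e)
    (Nat.mul_pos Nat.card_pos (Nat.pos_of_ne_zero he)) ?_
  rw [pow_mul, h, pow_card_eq_one', h₁, smul_smul, smul_pow, mul_pow, hc, hc₁]
  simpa using isIntegral_one

theorem mul_mem_order (hw : IsUnimodularLift w) (he : e ≠ 0) (x : H)
    {b : Matrix (Fin e) (Fin e) ℂ} (hb : b ∈ order w) :
    (w x : Matrix (Fin e) (Fin e) ℂ) * b ∈ order w := by
  induction hb using Submodule.span_induction with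
  | mem b hb =>
    obtain ⟨y, rfl⟩ := hb
    obtain ⟨c, hc, h⟩ := hw x y
    simp only [h]
    exact smul_mem_order he hc (Submodule.subset_span ⟨_, rfl⟩)
  | zero => simp
  | add a b _ _ ha hb => rw [mul_add]; exact add_mem ha hb
  | smul a b _ hb => rw [mul_smul_comm]; exact Submodule.smul_mem _ _ hb

theorem inv_mul_mem_order (hw : IsUnimodularLift w) (he : e ≠ 0) (x : H)
    {b : Matrix (Fin e) (Fin e) ℂ} (hb : b ∈ order w) :
    (((w x)⁻¹ : Matrix.SpecialLinearGroup (Fin e) ℂ) : Matrix (Fin e) (Fin e) ℂ) * b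
      ∈ order w := by
  obtain ⟨c, hc, h⟩ := hw.coe_inv he x
  rw [h, smul_mul_assoc]
  exact smul_mem_order he hc (hw.mul_mem_order he _ hb)

variable [Fintype H]

/-- Orthogonality relations for an irreducible projective representation. -/
theorem sum_conj_eq (hw : IsUnimodularLift w) (he : e ≠ 0)
    (hirr : ∀ b : Matrix (Fin e) (Fin e) ℂ,
      (∀ x, (w x : Matrix (Fin e) (Fin e) ℂ) * b = b * w x) → ∃ c : ℂ, b = c • 1)
    (b : Matrix (Fin e) (Fin e) ℂ) :
    ∑ y, (w y : Matrix (Fin e) (Fin e) ℂ) * b *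
      ((w y)⁻¹ : Matrix.SpecialLinearGroup (Fin e) ℂ) =
        ((Fintype.card H : ℂ) * (b.trace / e)) • (1 : Matrix (Fin e) (Fin e) ℂ) := by
  have hinv (x : H) : (((w x)⁻¹ : Matrix.SpecialLinearGroup (Fin e) ℂ) :
      Matrix (Fin e) (Fin e) ℂ) * w x = 1 := by
    rw [← Matrix.SpecialLinearGroup.coe_mul]; simp
  have hinv' (x : H) : (w x : Matrix (Fin e) (Fin e) ℂ) *
      ((w x)⁻¹ : Matrix.SpecialLinearGroup (Fin e) ℂ) = 1 := by
    rw [← Matrix.SpecialLinearGroup.coe_mul]; simp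
  have htwist (x y : H) : (w x : Matrix (Fin e) (Fin e) ℂ) *
      ((w y : Matrix (Fin e) (Fin e) ℂ) * b * ((w y)⁻¹ : Matrix.SpecialLinearGroup (Fin e) ℂ)) =
        (w (x * y) : Matrix (Fin e) (Fin e) ℂ) * b *
          ((w (x * y))⁻¹ : Matrix.SpecialLinearGroup (Fin e) ℂ) * w x := by
    obtain ⟨c, -, h⟩ := hw x y
    have h' : (((w (x * y))⁻¹ : Matrix.SpecialLinearGroup (Fin e) ℂ) :
        Matrix (Fin e) (Fin e) ℂ) * w x =
          c • (((w y)⁻¹ : Matrix.SpecialLinearGroup (Fin e) ℂ) : Matrix (Fin e) (Fin e) ℂ) := by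
      have h₀ := congrArg ((((w (x * y))⁻¹ : Matrix.SpecialLinearGroup (Fin e) ℂ) :
        Matrix (Fin e) (Fin e) ℂ) * · *
          (((w y)⁻¹ : Matrix.SpecialLinearGroup (Fin e) ℂ) : Matrix (Fin e) (Fin e) ℂ)) h
      simpa only [mul_smul_comm, smul_mul_assoc, hinv, one_mul, mul_assoc, hinv', mul_one]
        using h₀
    rw [mul_assoc _ _ (w x : Matrix (Fin e) (Fin e) ℂ), h', mul_smul_comm, ← mul_assoc,
      ← mul_assoc, h, smul_mul_assoc, smul_mul_assoc]
  obtain ⟨c, hc⟩ := hirr (∑ y, (w y : Matrix (Fin e) (Fin e) ℂ) * b *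
      ((w y)⁻¹ : Matrix.SpecialLinearGroup (Fin e) ℂ)) (by
    intro x
    rw [Finset.mul_sum, Finset.sum_congr rfl fun y _ => htwist x y, ← Finset.sum_mul]
    congr 1
    exact Equiv.sum_comp (Equiv.mulLeft x) fun y => (w y : Matrix (Fin e) (Fin e) ℂ) * b *
      ((w y)⁻¹ : Matrix.SpecialLinearGroup (Fin e) ℂ))
  rw [hc]
  congr 1
  have htr := congrArg Matrix.trace hc
  have hterm (y : H) : ((w y : Matrix (Fin e) (Fin e) ℂ) * b *
      ((w y)⁻¹ : Matrix.SpecialLinearGroup (Fin e) ℂ)).trace = b.trace := by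
    rw [Matrix.trace_mul_comm, ← mul_assoc, hinv, one_mul]
  rw [Matrix.trace_sum, Finset.sum_congr rfl fun y _ => hterm y] at htr
  simp at htr
  field_simp
  linear_combination -htr

theorem isIntegral_trace_div (hw : IsUnimodularLift w) (he : e ≠ 0)
    (hirr : ∀ b : Matrix (Fin e) (Fin e) ℂ,
      (∀ x, (w x : Matrix (Fin e) (Fin e) ℂ) * b = b * w x) → ∃ c : ℂ, b = c • 1)
    (hcop : e.Coprime (Fintype.card H)) (x : H) :
    IsIntegral ℤ ((w x : Matrix (Fin e) (Fin e) ℂ).trace / e) := by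
  have he' : (e : ℂ) ≠ 0 := Nat.cast_ne_zero.mpr he
  have : NeZero e := ⟨he⟩
  refine isIntegral_of_coprime_mul hcop ?_ ?_
  · rw [mul_div_cancel₀ _ he']
    exact Matrix.isIntegral_trace (hw.isIntegral he x)
  · refine isIntegral_trans (A := integralClosure ℤ ℂ) _ ?_
    refine isIntegral_of_smul_mem_submodule (order w) ?_
      (Submodule.fg_span (Set.finite_range _)) _ fun b hb => ?_
    · intro h
      have h1 : (w 1 : Matrix (Fin e) (Fin e) ℂ) ∈ order w := Submodule.subset_span ⟨1, rfl⟩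
      rw [h, Submodule.mem_bot] at h1
      have := (w 1).det_coe
      rw [h1, Matrix.det_zero] at this
      exact zero_ne_one this
    · have h := congrArg (· * b) (hw.sum_conj_eq he hirr (w x : Matrix (Fin e) (Fin e) ℂ))
      simp only [smul_mul_assoc, one_mul] at h
      rw [← h, Finset.sum_mul]
      refine sum_mem fun y _ => ?_
      rw [mul_assoc, mul_assoc]
      exact hw.mul_mem_order he _ (hw.mul_mem_order he _ (hw.inv_mul_mem_order he _ hb))

theorem sum_trace_mul_trace_inv (hw : IsUnimodularLift w) (he : e ≠ 0)
    (hirr : ∀ b : Matrix (Fin e) (Fin e) ℂ,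
      (∀ x, (w x : Matrix (Fin e) (Fin e) ℂ) * b = b * w x) → ∃ c : ℂ, b = c • 1) :
    ∑ x, (w x : Matrix (Fin e) (Fin e) ℂ).trace *
      (((w x)⁻¹ : Matrix.SpecialLinearGroup (Fin e) ℂ) : Matrix (Fin e) (Fin e) ℂ).trace =
        Fintype.card H := by
  have he' : (e : ℂ) ≠ 0 := Nat.cast_ne_zero.mpr he
  simp_rw [Matrix.trace_mul_trace_eq_sum]
  rw [Finset.sum_comm]
  simp_rw [Finset.sum_comm (s := (Finset.univ : Finset H)), ← Matrix.sum_apply,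
    hw.sum_conj_eq he hirr]
  have hentry (i j : Fin e) : (((Fintype.card H : ℂ) *
      ((Matrix.single i j (1 : ℂ)).trace / e)) • (1 : Matrix (Fin e) (Fin e) ℂ)) i j =
        if i = j then (Fintype.card H : ℂ) / e else 0 := by
    split_ifs with h
    · subst h; simp [div_eq_mul_inv]
    · simp [h]
  simp_rw [hentry]
  simp
  field_simp

theorem degree_eq_one (hw : IsUnimodularLift w) (he : e ≠ 0)
    (hirr : ∀ b : Matrix (Fin e) (Fin e) ℂ,
      (∀ x, (w x : Matrix (Fin e) (Fin e) ℂ) * b = b * w x) → ∃ c : ℂ, b = c • 1)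
    (hcop : e.Coprime (Fintype.card H)) : e = 1 := by
  have he' : (e : ℂ) ≠ 0 := Nat.cast_ne_zero.mpr he
  have hsum : ((e ^ 2 : ℕ) : ℂ) * ∑ x, ((w x : Matrix (Fin e) (Fin e) ℂ).trace / e) *
      ((((w x)⁻¹ : Matrix.SpecialLinearGroup (Fin e) ℂ) : Matrix (Fin e) (Fin e) ℂ).trace / e) =
        Fintype.card H := by
    rw [← hw.sum_trace_mul_trace_inv he hirr, Finset.mul_sum]
    refine Finset.sum_congr rfl fun x _ => ?_
    push_cast
    field_simp
  have hdvd := dvd_of_isIntegral_of_mul_eq (IsIntegral.sum _ fun x _ => ?_)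
    (pow_ne_zero 2 he) hsum
  · exact hcop.eq_one_of_dvd (dvd_trans (dvd_pow_self e two_ne_zero) hdvd)
  · refine (hw.isIntegral_trace_div he hirr hcop x).mul ?_
    obtain ⟨c, hc, h⟩ := hw.coe_inv he x
    rw [h, Matrix.trace_smul, smul_eq_mul, mul_div_assoc]
    exact (IsIntegral.of_pow (Nat.pos_of_ne_zero he) (hc ▸ isIntegral_one)).mul
      (hw.isIntegral_trace_div he hirr hcop _)

end IsUnimodularLift

end ProjectiveRepresentation

theorem Matrix.exists_smul_one_of_forall_commute {n : Type*} [Fintype n] [DecidableEq n]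
    {A : Matrix n n ℂ} (h : ∀ B, B * A = A * B) : ∃ c : ℂ, A = c • 1 := by
  obtain ⟨c, hc⟩ := Matrix.mem_range_scalar_iff_commute_single'.mpr fun i j =>
    h (Matrix.single i j 1)
  exact ⟨c, by rw [← hc, Matrix.scalar_apply, Matrix.smul_one_eq_diagonal]⟩

theorem Matrix.exists_specialLinear_conj {e : ℕ} (he : e ≠ 0)
    (f : Matrix (Fin e) (Fin e) ℂ ≃ₐ[ℂ] Matrix (Fin e) (Fin e) ℂ) :
    ∃ w : Matrix.SpecialLinearGroup (Fin e) ℂ, ∀ b,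
      (w : Matrix (Fin e) (Fin e) ℂ) * b = f b * w := by
  obtain ⟨T, hT⟩ := AlgEquiv.eq_linearEquivConjAlgEquiv
    ((Matrix.toLinAlgEquiv'.symm.trans f).trans Matrix.toLinAlgEquiv')
  set P := LinearMap.toMatrix' (T : (Fin e → ℂ) →ₗ[ℂ] Fin e → ℂ) with hP
  have hPT : Matrix.toLin' P = T := Matrix.toLin'_toMatrix' _
  have hcomm (b) : P * b = f b * P := by
    apply Matrix.toLin'.injective
    rw [Matrix.toLin'_mul, Matrix.toLin'_mul, hPT]
    have h := DFunLike.congr_fun hT (Matrix.toLinAlgEquiv' b)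
    rw [LinearEquiv.conjAlgEquiv_apply, AlgEquiv.trans_apply, AlgEquiv.trans_apply,
      AlgEquiv.symm_apply_apply] at h
    change Matrix.toLin' (f b) = _ ∘ₗ Matrix.toLin' b ∘ₗ _ at h
    rw [h]
    refine LinearMap.ext fun x => ?_
    simp
  have hdet : P.det ≠ 0 := by
    rw [hP, LinearMap.det_toMatrix']
    exact T.isUnit_det'.ne_zero
  obtain ⟨c, hc⟩ := IsAlgClosed.exists_pow_nat_eq P.det⁻¹ (Nat.pos_of_ne_zero he)
  refine ⟨⟨c • P, ?_⟩, fun b => ?_⟩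
  · rw [Matrix.det_smul, Fintype.card_fin, hc, inv_mul_cancel₀ hdet]
  · change (c • P) * b = f b * (c • P)
    rw [smul_mul_assoc, mul_smul_comm, hcomm]

/-- An ergodic action on a matrix algebra of degree coprime to the order of the group exists only
in degree one. -/
theorem Matrix.degree_eq_one_of_ergodic {H : Type*} [Group H] [Fintype H] {e : ℕ} (he : e ≠ 0)
    (α : H →* (Matrix (Fin e) (Fin e) ℂ ≃ₐ[ℂ] Matrix (Fin e) (Fin e) ℂ))
    (hfix : ∀ b, (∀ x, α x b = b) → ∃ c : ℂ, b = c • 1)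
    (hcop : e.Coprime (Fintype.card H)) : e = 1 := by
  choose w hw using fun x => Matrix.exists_specialLinear_conj he (α x)
  have hinv (x : H) : (((w x)⁻¹ : Matrix.SpecialLinearGroup (Fin e) ℂ) :
      Matrix (Fin e) (Fin e) ℂ) * w x = 1 := by
    rw [← Matrix.SpecialLinearGroup.coe_mul]; simp
  have hinv' (x : H) : (w x : Matrix (Fin e) (Fin e) ℂ) *
      ((w x)⁻¹ : Matrix.SpecialLinearGroup (Fin e) ℂ) = 1 := by
    rw [← Matrix.SpecialLinearGroup.coe_mul]; simp
  refine IsUnimodularLift.degree_eq_one (w := w) (fun x y => ?_) he (fun b hb => ?_) hcop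
  · obtain ⟨c, hc⟩ := Matrix.exists_smul_one_of_forall_commute
      (A := (((w (x * y))⁻¹ * (w x * w y) : Matrix.SpecialLinearGroup (Fin e) ℂ) :
        Matrix (Fin e) (Fin e) ℂ)) (fun B => by
        simp only [Matrix.SpecialLinearGroup.coe_mul]
        have h₁ : (w x : Matrix (Fin e) (Fin e) ℂ) * w y * B =
            α (x * y) B * (w x * w y) := by
          rw [mul_assoc, hw y, ← mul_assoc, hw x, map_mul α, AlgEquiv.mul_apply, mul_assoc]
        have h₂ : B * (((w (x * y))⁻¹ : Matrix.SpecialLinearGroup (Fin e) ℂ) :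
            Matrix (Fin e) (Fin e) ℂ) =
              ((w (x * y))⁻¹ : Matrix.SpecialLinearGroup (Fin e) ℂ) * α (x * y) B := by
          have h := congrArg ((((w (x * y))⁻¹ : Matrix.SpecialLinearGroup (Fin e) ℂ) :
            Matrix (Fin e) (Fin e) ℂ) * · * (((w (x * y))⁻¹ :
              Matrix.SpecialLinearGroup (Fin e) ℂ) : Matrix (Fin e) (Fin e) ℂ)) (hw (x * y) B)
          simpa only [← mul_assoc, hinv, one_mul, mul_assoc _ _ (((w (x * y))⁻¹ :
            Matrix.SpecialLinearGroup (Fin e) ℂ) : Matrix (Fin e) (Fin e) ℂ), hinv', mul_one]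
            using h
        rw [← mul_assoc, h₂, mul_assoc, mul_assoc, h₁])
    refine ⟨c, ?_, ?_⟩
    · have := ((w (x * y))⁻¹ * (w x * w y)).det_coe
      rwa [hc, Matrix.det_smul, Fintype.card_fin, Matrix.det_one, mul_one] at this
    · have := congrArg ((w (x * y) : Matrix (Fin e) (Fin e) ℂ) * ·) hc
      simpa only [Matrix.SpecialLinearGroup.coe_mul, ← mul_assoc, hinv', one_mul, mul_smul_comm,
        mul_one] using this
  · refine hfix b fun x => ?_
    have h := (hw x b).symm.trans (hb x)
    have := congrArg (· * (((w x)⁻¹ : Matrix.SpecialLinearGroup (Fin e) ℂ) :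
      Matrix (Fin e) (Fin e) ℂ)) h
    simpa only [mul_assoc, hinv', mul_one] using this

theorem Matrix.exists_natCast_eq_trace_of_isIdempotentElem {n : ℕ} {A : Matrix (Fin n) (Fin n) ℂ}
    (hA : IsIdempotentElem A) : ∃ r : ℕ, r ≤ n ∧ A.trace = r ∧ (r = 0 → A = 0) ∧
      (r = n → A = 1) := by
  have hf : IsIdempotentElem (Matrix.toLin' A) := by
    unfold IsIdempotentElem
    rw [Module.End.mul_eq_comp, ← Matrix.toLin'_mul, hA]
  have hp := LinearMap.IsIdempotentElem.isProj_range _ hf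
  refine ⟨Module.finrank ℂ (Matrix.toLin' A).range, ?_, ?_, fun h => ?_, fun h => ?_⟩
  · simpa using (Matrix.toLin' A).range.finrank_le
  · rw [← Matrix.trace_toLin'_eq, hp.trace]
  · apply Matrix.toLin'.injective
    rw [map_zero, ← LinearMap.range_eq_bot, ← Submodule.finrank_eq_zero, h]
  · have htop : (Matrix.toLin' A).range = ⊤ := Submodule.eq_top_of_finrank_eq (by simpa using h)
    apply Matrix.toLin'.injective
    refine LinearMap.ext fun x => ?_
    rw [hp.map_id _ (htop ▸ Submodule.mem_top)]
    simp

section ErgodicAction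

variable {H E : Type*} [Group H] [Fintype H] [Ring E] [Algebra ℂ E] {n : ℕ}
  {α : H →* (E ≃ₐ[ℂ] E)} {φ : E →ₐ[ℂ] Matrix (Fin n) (Fin n) ℂ}

theorem sum_action_eq_algebraMap (hn : n ≠ 0)
    (hfix : ∀ b, (∀ x, α x b = b) → ∃ c : ℂ, b = algebraMap ℂ E c)
    (htr : ∀ x b, (φ (α x b)).trace = (φ b).trace) (b : E) :
    ∑ x, α x b = algebraMap ℂ E (Fintype.card H * ((φ b).trace / n)) := by
  obtain ⟨c, hc⟩ := hfix (∑ x, α x b) fun y => by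
    rw [map_sum]
    simp_rw [← AlgEquiv.mul_apply, ← map_mul]
    exact Equiv.sum_comp (Equiv.mulLeft y) fun x => α x b
  rw [hc]
  congr 1
  have h := congrArg (fun a => (φ a).trace) hc
  have hn' : (n : ℂ) ≠ 0 := Nat.cast_ne_zero.mpr hn
  simp only [map_sum, Matrix.trace_sum, htr, Algebra.algebraMap_eq_smul_one] at h
  simp at h
  field_simp
  linear_combination -h

theorem eq_zero_or_one_of_central_of_ergodic (hn : n ≠ 0) [Nontrivial E]
    (hfix : ∀ b, (∀ x, α x b = b) → ∃ c : ℂ, b = algebraMap ℂ E c)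
    (hφ : Function.Injective φ) (htr : ∀ x b, (φ (α x b)).trace = (φ b).trace)
    (hcop : n.Coprime (Fintype.card H)) {z : E} (hz : IsIdempotentElem z)
    (hcen : ∀ b, b * z = z * b) : z = 0 ∨ z = 1 := by
  obtain ⟨r, hrn, hr, hr0, hr1⟩ := Matrix.exists_natCast_eq_trace_of_isIdempotentElem (hz.map φ)
  have hn' : (n : ℂ) ≠ 0 := Nat.cast_ne_zero.mpr hn
  have hint : IsIntegral ℤ ((Fintype.card H : ℂ) * ((φ z).trace / n)) := by
    have hmem (x : H) : α x z ∈ Subalgebra.center ℂ E := by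
      rw [Subalgebra.mem_center_iff]
      intro b
      obtain ⟨b, rfl⟩ := (α x).surjective b
      rw [← map_mul, hcen, map_mul]
    have hs : IsIntegral ℤ (∑ x, (⟨α x z, hmem x⟩ : Subalgebra.center ℂ E)) := by
      refine IsIntegral.sum _ fun x _ => 
        ⟨Polynomial.X * (Polynomial.X - Polynomial.C 1),
          Polynomial.monic_X.mul (Polynomial.monic_X_sub_C 1), ?_⟩
      have hx : (⟨α x z, hmem x⟩ : Subalgebra.center ℂ E) * ⟨α x z, hmem x⟩ = ⟨α x z, hmem x⟩ :=
        Subtype.ext (hz.map (α x))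
      simp [mul_sub, hx]
    have hs' : ∑ x, (⟨α x z, hmem x⟩ : Subalgebra.center ℂ E) = algebraMap ℂ _
        (Fintype.card H * ((φ z).trace / n)) := by
      apply Subtype.ext
      rw [AddSubmonoidClass.coe_finsetSum, sum_action_eq_algebraMap hn hfix htr z]
      rfl
    rw [hs'] at hs
    exact (isIntegral_algebraMap_iff (algebraMap ℂ (Subalgebra.center ℂ E)).injective).mp hs
  have hdvd : n ∣ Fintype.card H * r := by
    refine dvd_of_isIntegral_of_mul_eq hint hn ?_
    rw [hr]; push_cast; field_simp
  rcases Nat.eq_zero_or_pos r with h | h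
  · exact Or.inl (hφ (by rw [hr0 h, map_zero]))
  · exact Or.inr (hφ (by
      rw [hr1 (le_antisymm hrn (Nat.le_of_dvd h (hcop.dvd_of_dvd_mul_left hdvd))), map_one]))

theorem dvd_of_algHom_matrix {e : ℕ}
    (φ : Matrix (Fin e) (Fin e) ℂ →ₐ[ℂ] Matrix (Fin n) (Fin n) ℂ) : e ∣ n := by
  rcases Nat.eq_zero_or_pos e with rfl | he
  · have h : (1 : Matrix (Fin n) (Fin n) ℂ) = 0 := by
      rw [← map_one φ, Subsingleton.elim (1 : Matrix (Fin 0) (Fin 0) ℂ) 0, map_zero]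
    have := congrArg Matrix.trace h
    simpa using this
  let i₀ : Fin e := ⟨0, he⟩
  obtain ⟨r, -, hr, -⟩ := Matrix.exists_natCast_eq_trace_of_isIdempotentElem
    (A := φ (Matrix.single i₀ i₀ 1)) (IsIdempotentElem.map (by simp [IsIdempotentElem]) φ)
  have htr (i : Fin e) : (φ (Matrix.single i i 1)).trace = r := by
    have h₁ : (Matrix.single i i 1 : Matrix (Fin e) (Fin e) ℂ) =
      Matrix.single i i₀ 1 * Matrix.single i₀ i 1 := by simp
    have h₂ : (Matrix.single i₀ i₀ 1 : Matrix (Fin e) (Fin e) ℂ) =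
      Matrix.single i₀ i 1 * Matrix.single i i₀ 1 := by simp
    rw [← hr, h₁, h₂, map_mul, map_mul, Matrix.trace_mul_comm]
  have hsum : (∑ i : Fin e, Matrix.single i i 1 : Matrix (Fin e) (Fin e) ℂ) = 1 := by
    rw [Matrix.sum_single_eq_diagonal, ← Matrix.diagonal_one]
  have h := congrArg (fun a => (φ a).trace) hsum
  simp only [map_sum, Matrix.trace_sum, htr, map_one, Matrix.trace_one] at h
  refine ⟨r, ?_⟩
  simp at h
  exact_mod_cast h.symm

theorem eq_algebraMap_of_ergodic [FiniteDimensional ℂ E] [IsSemisimpleRing E] [Nontrivial E]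
    (hn : n ≠ 0)
    (hfix : ∀ b, (∀ x, α x b = b) → ∃ c : ℂ, b = algebraMap ℂ E c)
    (hφ : Function.Injective φ) (htr : ∀ x b, (φ (α x b)).trace = (φ b).trace)
    (hcop : n.Coprime (Fintype.card H)) (b : E) : ∃ c : ℂ, b = algebraMap ℂ E c := by
  obtain ⟨k, d, hd, ⟨Ψ⟩⟩ := IsSemisimpleRing.exists_algEquiv_pi_matrix_of_isAlgClosed ℂ E
  obtain ⟨e, he, ⟨Θ⟩⟩ : ∃ e : ℕ, e ≠ 0 ∧ Nonempty (E ≃ₐ[ℂ] Matrix (Fin e) (Fin e) ℂ) := by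
    have hk : Nonempty (Fin k) := by
      by_contra hk
      rw [not_nonempty_iff] at hk
      exact one_ne_zero (Ψ.injective (Subsingleton.elim (Ψ (1 : E)) (Ψ 0)))
    obtain ⟨i⟩ := hk
    have hne : Nonempty (Fin (d i)) := ⟨⟨0, Nat.pos_of_ne_zero (hd i).out⟩⟩
    have hz : IsIdempotentElem (Pi.single i 1 : Π i, Matrix (Fin (d i)) (Fin (d i)) ℂ) := by
      unfold IsIdempotentElem
      rw [← Pi.single_mul, mul_one]
    have hcen (b : Π i, Matrix (Fin (d i)) (Fin (d i)) ℂ) :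
        b * Pi.single i 1 = Pi.single i 1 * b := by
      ext j : 1
      rcases eq_or_ne j i with rfl | h
      · simp
      · simp [h]
    have hone : (Pi.single i 1 : Π i, Matrix (Fin (d i)) (Fin (d i)) ℂ) = 1 := by
      rcases eq_zero_or_one_of_central_of_ergodic hn hfix hφ htr hcop (hz.map Ψ.symm)
        (fun b => by
          apply Ψ.injective
          simp [hcen]) with h | h
      · rw [map_eq_zero_iff _ Ψ.symm.injective] at h
        have := congrFun h i
        simp at this
      · rwa [map_eq_one_iff _ Ψ.symm.injective] at h
    have huniq (j : Fin k) : j = i := by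
      by_contra h
      have hj : Nonempty (Fin (d j)) := ⟨⟨0, Nat.pos_of_ne_zero (hd j).out⟩⟩
      have := congrFun hone j
      simp [h] at this
    refine ⟨d i, (hd i).out, ⟨Ψ.trans (AlgEquiv.ofBijective (Pi.evalAlgHom ℂ _ i) ⟨?_, ?_⟩)⟩⟩
    · intro a b hab
      ext j : 1
      rw [huniq j]
      exact hab
    · exact fun a => ⟨Pi.single i a, by simp⟩
  have he1 : e = 1 := by
    refine Matrix.degree_eq_one_of_ergodic he ((AlgEquiv.autCongr Θ).toMonoidHom.comp α)
      (fun b hb => ?_) (hcop.coprime_dvd_left (dvd_of_algHom_matrix (φ.comp Θ.symm.toAlgHom)))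
    obtain ⟨c, hc⟩ := hfix (Θ.symm b) fun x => by
      apply Θ.injective
      simpa using hb x
    refine ⟨c, ?_⟩
    rw [← Θ.apply_symm_apply b, hc, AlgEquiv.commutes, Algebra.algebraMap_eq_smul_one]
  subst he1
  refine ⟨Θ b 0 0, Θ.injective ?_⟩
  rw [AlgEquiv.commutes]
  ext i j
  simp [Subsingleton.elim i 0, Subsingleton.elim j 0, Matrix.algebraMap_matrix_apply]

end ErgodicAction

section MatrixRepresentation

variable {G : Type*} [Group G] {n : ℕ} (f : G →* Matrix (Fin n) (Fin n) ℂ)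

theorem MonoidHom.mul_inv_matrix (g : G) : f g * f g⁻¹ = 1 := by
  rw [← map_mul, mul_inv_cancel, map_one]

theorem MonoidHom.inv_mul_matrix (g : G) : f g⁻¹ * f g = 1 := by
  rw [← map_mul, inv_mul_cancel, map_one]

open scoped ComplexOrder in
theorem trace_map_inv [Fintype G] (g : G) :
    (f g⁻¹).trace = (starRingEnd ℂ) (f g).trace := by
  set P := ∑ x, (f x).conjTranspose * f x with hP
  have hpos : P.PosDef := by
    rw [hP, ← Finset.add_sum_erase _ _ (Finset.mem_univ 1)]
    refine Matrix.PosDef.add_posSemidef ?_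
      (Matrix.posSemidef_sum _ fun x _ => Matrix.posSemidef_conjTranspose_mul_self _)
    simpa using Matrix.PosDef.one
  have hinv : (f g).conjTranspose * P * f g = P := by
    rw [hP, Finset.mul_sum, Finset.sum_mul]
    rw [← Equiv.sum_comp (Equiv.mulRight g) fun x => (f x).conjTranspose * f x]
    refine Finset.sum_congr rfl fun x _ => ?_
    simp only [Equiv.coe_mulRight, map_mul, Matrix.conjTranspose_mul, mul_assoc]
  have hcomm : (f g).conjTranspose * P = P * f g⁻¹ := by
    rw [← hinv, mul_assoc _ (f g), f.mul_inv_matrix, mul_one, hinv]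
  obtain ⟨u, hu⟩ := hpos.isUnit
  rw [← hu] at hcomm
  calc (f g⁻¹).trace = (((u⁻¹ : (Matrix (Fin n) (Fin n) ℂ)ˣ) : Matrix (Fin n) (Fin n) ℂ) *
        (u * f g⁻¹)).trace := by rw [Units.inv_mul_cancel_left]
    _ = (f g).conjTranspose.trace := by
        rw [← hcomm, Matrix.trace_mul_comm, mul_assoc, Units.mul_inv, mul_one]
    _ = (starRingEnd ℂ) (f g).trace := Matrix.trace_conjTranspose _

theorem cdot_trace_eq [Fintype G] :
    cdot G (fun g => (f g).trace) (fun g => (f g).trace) =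
      (Fintype.card G : ℂ)⁻¹ * ∑ g, (f g).trace * (f g⁻¹).trace := by
  rw [cdot, finsum_eq_sum_of_fintype, Nat.card_eq_fintype_card]
  simp_rw [trace_map_inv]

variable [Fintype G]

theorem map_mul_sum_conj (b : Matrix (Fin n) (Fin n) ℂ) (x : G) :
    f x * ∑ g, f g * b * f g⁻¹ = (∑ g, f g * b * f g⁻¹) * f x := by
  rw [Finset.mul_sum, ← Equiv.sum_comp (Equiv.mulLeft x) fun g => f g * b * f g⁻¹, Finset.sum_mul]
  refine Finset.sum_congr rfl fun g _ => ?_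
  simp only [Equiv.coe_mulLeft, mul_inv_rev, map_mul, mul_assoc, f.inv_mul_matrix, mul_one]

theorem trace_sum_conj (b : Matrix (Fin n) (Fin n) ℂ) :
    (∑ g, f g * b * f g⁻¹).trace = Fintype.card G * b.trace := by
  have h (g : G) : (f g * b * f g⁻¹).trace = b.trace := by
    rw [Matrix.trace_mul_comm, ← mul_assoc, f.inv_mul_matrix, one_mul]
  simp [Matrix.trace_sum, h]

theorem cdot_trace_eq_one_of_commutant (hn : n ≠ 0)
    (hirr : ∀ b, (∀ g, f g * b = b * f g) → ∃ c : ℂ, b = c • 1) :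
    cdot G (fun g => (f g).trace) (fun g => (f g).trace) = 1 := by
  have hn' : (n : ℂ) ≠ 0 := Nat.cast_ne_zero.mpr hn
  have hG : (Fintype.card G : ℂ) ≠ 0 := Nat.cast_ne_zero.mpr Fintype.card_ne_zero
  have hsum (b : Matrix (Fin n) (Fin n) ℂ) :
      ∑ g, f g * b * f g⁻¹ = ((Fintype.card G : ℂ) * b.trace / n) • 1 := by
    obtain ⟨c, hc⟩ := hirr _ (map_mul_sum_conj f b)
    have h := trace_sum_conj f b
    rw [hc, Matrix.trace_smul, Matrix.trace_one, Fintype.card_fin, smul_eq_mul] at h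
    rw [hc, ← h, mul_div_cancel_right₀ _ hn']
  have hentry (i j : Fin n) : (((Fintype.card G : ℂ) * (Matrix.single i j (1 : ℂ)).trace / n) •
      (1 : Matrix (Fin n) (Fin n) ℂ)) i j = if i = j then (Fintype.card G : ℂ) / n else 0 := by
    split_ifs with h
    · subst h; simp
    · simp [h]
  rw [cdot_trace_eq]
  simp_rw [Matrix.trace_mul_trace_eq_sum]
  rw [Finset.sum_comm]
  simp_rw [Finset.sum_comm (s := (Finset.univ : Finset G)), ← Matrix.sum_apply, hsum, hentry]
  simp
  field_simp

theorem commutant_of_cdot_trace_eq_one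
    (h : cdot G (fun g => (f g).trace) (fun g => (f g).trace) = 1)
    (b : Matrix (Fin n) (Fin n) ℂ) (hb : ∀ g, f g * b = b * f g) : ∃ c : ℂ, b = c • 1 := by
  have hG : (Fintype.card G : ℂ) ≠ 0 := Nat.cast_ne_zero.mpr Fintype.card_ne_zero
  rcases Nat.eq_zero_or_pos n with rfl | hn
  · exact ⟨0, Subsingleton.elim _ _⟩
  have : NeZero n := ⟨hn.ne'⟩
  let C : Submodule ℂ (Matrix (Fin n) (Fin n) ℂ) :=
    (Subalgebra.centralizer ℂ (Set.range f)).toSubmodule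
  have hC (b) : b ∈ C ↔ ∀ g, f g * b = b * f g := by
    simp [C, Subalgebra.mem_centralizer_iff]
  let P : Matrix (Fin n) (Fin n) ℂ →ₗ[ℂ] Matrix (Fin n) (Fin n) ℂ :=
    (Fintype.card G : ℂ)⁻¹ • ∑ g, LinearMap.mulLeftRight ℂ (f g, f g⁻¹)
  have hP (b) : P b = (Fintype.card G : ℂ)⁻¹ • ∑ g, f g * b * f g⁻¹ := by
    simp [P, LinearMap.sum_apply, LinearMap.mulLeftRight_apply]
  have hproj : LinearMap.IsProj C P := by
    refine ⟨fun b => (hC _).mpr fun g => ?_, fun b hb => ?_⟩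
    · rw [hP, mul_smul_comm, smul_mul_assoc, map_mul_sum_conj]
    · rw [hC] at hb
      simp_rw [hP, hb, mul_assoc, f.mul_inv_matrix, mul_one]
      simp [← Nat.cast_smul_eq_nsmul ℂ, smul_smul, hG]
  have htrace (A B : Matrix (Fin n) (Fin n) ℂ) :
      LinearMap.trace ℂ _ (LinearMap.mulLeftRight ℂ (A, B)) = A.trace * B.trace := by
    rw [LinearMap.trace_eq_matrix_trace ℂ (Matrix.stdBasis ℂ (Fin n) (Fin n)),
      Matrix.trace_mul_trace_eq_sum, Matrix.trace, Fintype.sum_prod_type]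
    refine Finset.sum_congr rfl fun i _ => Finset.sum_congr rfl fun j _ => ?_
    rw [Matrix.diag_apply, LinearMap.toMatrix_apply, Matrix.stdBasis_eq_single,
      LinearMap.mulLeftRight_apply]
    rfl
  have hrank : Module.finrank ℂ C = 1 := by
    have h' := hproj.trace
    simp only [P, map_smul, map_sum, htrace, smul_eq_mul] at h'
    rw [← cdot_trace_eq, h] at h'
    exact_mod_cast h'.symm
  obtain ⟨c, hc⟩ := (finrank_eq_one_iff_of_nonzero' (⟨1, (hC 1).mpr (by simp)⟩ : C)
    (by simp [Subtype.ext_iff])).mp hrank ⟨b, (hC b).mpr hb⟩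
  exact ⟨c, (congrArg Subtype.val hc).symm⟩

theorem isSemisimpleRing_centralizer :
    IsSemisimpleRing (Subalgebra.centralizer ℂ (Set.range f)) := by
  have : IsArtinianRing (Subalgebra.centralizer ℂ (Set.range f)) := IsArtinianRing.of_finite ℂ _
  rw [IsArtinianRing.isSemisimpleRing_iff_jacobson, eq_bot_iff]
  intro b hb
  obtain ⟨k, hk⟩ := IsSemiprimaryRing.isNilpotent
    (R := Subalgebra.centralizer ℂ (Set.range f))
  have hnil (c : Subalgebra.centralizer ℂ (Set.range f)) :
      ((c : Matrix (Fin n) (Fin n) ℂ) * b).trace = 0 := by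
    have hcb : (c * b) ^ k = 0 := by
      have := Ideal.pow_mem_pow (Ideal.mul_mem_left _ c hb) k
      rwa [hk] at this
    have : IsNilpotent ((c : Matrix (Fin n) (Fin n) ℂ) * b) :=
      ⟨k, by simpa using congrArg Subtype.val hcb⟩
    exact (Matrix.isNilpotent_trace_of_isNilpotent this).eq_zero
  have hbf (g : G) : f g * b = b * f g :=
    (Subalgebra.mem_centralizer_iff ℂ).mp b.2 _ ⟨g, rfl⟩
  refine Subtype.ext (Matrix.ext_iff_trace_mul_left.mpr fun M => ?_)
  have hM := hnil ⟨∑ g, f g * M * f g⁻¹, (Subalgebra.mem_centralizer_iff ℂ).mpr (by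
    rintro _ ⟨g, rfl⟩; exact map_mul_sum_conj f M g)⟩
  have hterm : (∑ g, f g * M * f g⁻¹) * (b : Matrix (Fin n) (Fin n) ℂ) =
      ∑ g, f g * (M * b) * f g⁻¹ := by
    rw [Finset.sum_mul]
    exact Finset.sum_congr rfl fun g _ => by simp only [mul_assoc, hbf]
  rw [hterm, trace_sum_conj] at hM
  simpa using hM

/-- Conjugation by `G` on the commutant of a normal subgroup. -/
noncomputable def conjCentralizer (N : Subgroup G) [hN : N.Normal] :
    G →* (Subalgebra.centralizer ℂ (Set.range (f.comp N.subtype)) →ₐ[ℂ]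
      Subalgebra.centralizer ℂ (Set.range (f.comp N.subtype))) where
  toFun g :=
    { toFun := fun b => ⟨f g * b * f g⁻¹, (Subalgebra.mem_centralizer_iff ℂ).mpr (by
        rintro _ ⟨x, rfl⟩
        have hx := (Subalgebra.mem_centralizer_iff ℂ).mp b.2 _
          ⟨⟨g⁻¹ * x * g, by simpa using hN.conj_mem x x.2 g⁻¹⟩, rfl⟩
        simp only [MonoidHom.comp_apply, Subgroup.subtype_apply] at hx ⊢
        have h₁ : f x * f g = f g * f (g⁻¹ * x * g) := by simp only [← map_mul]; group
        have h₂ : f (g⁻¹ * x * g) * f g⁻¹ = f g⁻¹ * f x := by simp only [← map_mul]; group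
        rw [← mul_assoc, ← mul_assoc, h₁, mul_assoc (f g), hx, ← mul_assoc, mul_assoc _ _ (f g⁻¹),
          h₂, ← mul_assoc])⟩
      map_one' := Subtype.ext (by simp [f.mul_inv_matrix])
      map_mul' := fun a b => Subtype.ext (by
        simp only [MulMemClass.coe_mul]
        rw [mul_assoc _ (f g⁻¹), ← mul_assoc (f g⁻¹), ← mul_assoc (f g⁻¹), f.inv_mul_matrix,
          one_mul]
        simp only [mul_assoc])
      map_zero' := Subtype.ext (by simp)
      map_add' := fun a b => Subtype.ext (by
        change f g * ((a : Matrix (Fin n) (Fin n) ℂ) + b) * f g⁻¹ = f g * a * f g⁻¹ + f g * b * f g⁻¹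
        rw [mul_add, add_mul])
      commutes' := fun c => Subtype.ext (by
        change f g * algebraMap ℂ (Matrix (Fin n) (Fin n) ℂ) c * f g⁻¹ = algebraMap ℂ _ c
        simp [Algebra.algebraMap_eq_smul_one, f.mul_inv_matrix]) }
  map_one' := by
    apply AlgHom.ext
    intro b
    apply Subtype.ext
    change f 1 * b * f 1⁻¹ = b
    simp
  map_mul' g h := by
    apply AlgHom.ext
    intro b
    apply Subtype.ext
    change f (g * h) * b * f (g * h)⁻¹ = f g * (f h * b * f h⁻¹) * f g⁻¹
    simp [mul_assoc]

theorem commutant_restrict_of_coprime (N : Subgroup G) [N.Normal] (hn : n ≠ 0)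
    (hirr : ∀ b, (∀ g, f g * b = b * f g) → ∃ c : ℂ, b = c • 1) (hcop : n.Coprime N.index)
    (b : Matrix (Fin n) (Fin n) ℂ) (hb : ∀ x : N, f x * b = b * f x) : ∃ c : ℂ, b = c • 1 := by
  have : NeZero n := ⟨hn⟩
  let E := Subalgebra.centralizer ℂ (Set.range (f.comp N.subtype))
  have hss : IsSemisimpleRing E := isSemisimpleRing_centralizer (f.comp N.subtype)
  let α : G ⧸ N →* (E ≃ₐ[ℂ] E) := QuotientGroup.lift N
    ((AlgEquiv.algHomUnitsEquiv ℂ E).toMonoidHom.comp (conjCentralizer f N).toHomUnits) (by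
      intro x hx
      apply AlgEquiv.ext
      intro b
      apply Subtype.ext
      change f x * b * f x⁻¹ = b
      have := (Subalgebra.mem_centralizer_iff ℂ).mp b.2 _ ⟨⟨x, hx⟩, rfl⟩
      simp only [MonoidHom.comp_apply, Subgroup.subtype_apply] at this
      rw [this, mul_assoc, f.mul_inv_matrix, mul_one])
  have hα (g : G) (b : E) : (α g b : Matrix (Fin n) (Fin n) ℂ) = f g * b * f g⁻¹ := rfl
  obtain ⟨c, hc⟩ := eq_algebraMap_of_ergodic (α := α) (φ := E.val) hn (fun b hb => by
      obtain ⟨c, hc⟩ := hirr b fun g => by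
        have := congrArg Subtype.val (hb g)
        rw [hα] at this
        conv_rhs => rw [← this]
        rw [mul_assoc, f.inv_mul_matrix, mul_one]
      exact ⟨c, Subtype.ext (by rw [hc]; simp [Algebra.algebraMap_eq_smul_one])⟩)
    Subtype.val_injective
    (fun x b => by
      obtain ⟨g, rfl⟩ := QuotientGroup.mk_surjective x
      change (f g * b * f g⁻¹).trace = _
      rw [Matrix.trace_mul_comm, ← mul_assoc, f.inv_mul_matrix, one_mul]
      rfl)
    (by rwa [← Nat.card_eq_fintype_card, ← Subgroup.index_eq_card])
    ⟨b, (Subalgebra.mem_centralizer_iff ℂ).mpr (by rintro _ ⟨x, rfl⟩; exact hb x)⟩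
  exact ⟨c, by simpa [Algebra.algebraMap_eq_smul_one] using congrArg Subtype.val hc⟩

end MatrixRepresentation

theorem stmt7 (G : Type*) [Group G] [Finite G] (N : Subgroup G) [N.Normal]
    (χ : G → ℂ) (hχ : IsIrrChar G χ) (d : ℕ) (hd : χ 1 = d)
    (hcop : Nat.Coprime d N.index) :
    IsIrrChar N (res N χ) := by
  have := Fintype.ofFinite G
  obtain ⟨⟨n, ρ, rfl⟩, hnorm⟩ := hχ
  let f : G →* Matrix (Fin n) (Fin n) ℂ := (Units.coeHom _).comp ρ
  obtain rfl : n = d := by simpa using hd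
  have hn : n ≠ 0 := by
    rintro rfl
    simp [cdot] at hnorm
  exact ⟨⟨n, ρ.comp N.subtype, rfl⟩, cdot_trace_eq_one_of_commutant (f.comp N.subtype) hn
    (commutant_restrict_of_coprime f N hn (commutant_of_cdot_trace_eq_one f hnorm) hcop)⟩
end

section
/- Let N_1 ⊴ G_1 and N_2 ⊴ G_2 be finite groups. Then G_1 is relative almost monomial with respect to N_1 and G_2 is relative almost monomial with respect to N_2 if and only if G_1 × G_2 is relative almost monomial with respect to N_1 × N_2. -/
open scoped Classical

open Representation in
theorem isChar_character {G V : Type*} [Group G] [AddCommGroup V] [Module ℂ V]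
    [FiniteDimensional ℂ V] (ρ : Representation ℂ G V) : IsChar G ρ.character := by
  let b := Module.finBasis ℂ V
  refine ⟨Module.finrank ℂ V,
    ((LinearMap.toMatrixAlgEquiv b).toMulEquiv.toMonoidHom.comp ρ).toHomUnits, ?_⟩
  funext g
  exact LinearMap.trace_eq_matrix_trace ℂ b (ρ g)

theorem IsChar.exists_rep {G : Type*} [Group G] {f : G → ℂ} (hf : IsChar G f) :
    ∃ (n : ℕ) (ρ : Representation ℂ G (Fin n → ℂ)), ρ.character = f := by
  obtain ⟨n, ρ, rfl⟩ := hf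
  refine ⟨n, (Matrix.toLinAlgEquiv' : Matrix (Fin n) (Fin n) ℂ ≃ₐ[ℂ] _).toMulEquiv.toMonoidHom.comp
    ((Units.coeHom _).comp ρ), ?_⟩
  funext g
  exact Matrix.trace_toLin'_eq _

theorem IsChar.comp {A B : Type*} [Group A] [Group B] {f : B → ℂ} (hf : IsChar B f)
    (p : A →* B) : IsChar A (f ∘ p) := by
  obtain ⟨n, ρ, rfl⟩ := hf
  exact ⟨n, ρ.comp p, rfl⟩

theorem IsChar.mul {G : Type*} [Group G] {f h : G → ℂ} (hf : IsChar G f) (hh : IsChar G h) :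
    IsChar G (f * h) := by
  obtain ⟨n, ρ, rfl⟩ := hf.exists_rep
  obtain ⟨m, σ, rfl⟩ := hh.exists_rep
  rw [← Representation.char_tensor]
  exact isChar_character _

theorem isChar_one (G : Type*) [Group G] : IsChar G 1 :=
  ⟨1, 1, by funext g; simp⟩

theorem IsChar.conj {G : Type*} [Group G] {f : G → ℂ} (hf : IsChar G f) :
    IsChar G (star f) := by
  obtain ⟨n, ρ, rfl⟩ := hf
  refine ⟨n, (Matrix.GeneralLinearGroup.map (starRingEnd ℂ)).comp ρ, ?_⟩
  funext g
  simp [Matrix.trace]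

theorem IsChar.conj_mul_eq {G : Type*} [Group G] {f : G → ℂ} (hf : IsChar G f) (x g : G) :
    f (x * g * x⁻¹) = f g := by
  obtain ⟨n, ρ, rfl⟩ := hf.exists_rep
  exact ρ.char_conj g x

open scoped ComplexOrder in
/-- Every matrix representation of a finite group preserves a positive definite form, so its
character takes conjugate values at inverse elements. -/
theorem IsChar.inv_eq_conj {G : Type*} [Group G] [Finite G] {f : G → ℂ} (hf : IsChar G f)
    (g : G) : f g⁻¹ = starRingEnd ℂ (f g) := by
  obtain ⟨n, ρ, rfl⟩ := hf
  have := Fintype.ofFinite G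
  let r : G → Matrix (Fin n) (Fin n) ℂ := fun g => ρ g
  have hr : ∀ a b, r (a * b) = r a * r b := fun a b => by simp [r]
  have hr1 : r 1 = 1 := by simp [r]
  let P : Matrix (Fin n) (Fin n) ℂ := ∑ x, r x * (r x).conjTranspose
  have hP : P.PosDef := by
    have h1 : P = 1 + ∑ x ∈ Finset.univ.erase 1, r x * (r x).conjTranspose := by
      simp only [P]
      rw [← Finset.add_sum_erase _ _ (Finset.mem_univ (1 : G))]
      simp [hr1]
    rw [h1]
    exact Matrix.PosDef.one.add_posSemidef
      (Matrix.posSemidef_sum _ fun x _ => Matrix.posSemidef_self_mul_conjTranspose _)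
  have hinv : r g * P * (r g).conjTranspose = P := by
    simp only [P, Finset.mul_sum, Finset.sum_mul]
    refine Fintype.sum_equiv (Equiv.mulLeft g) _ _ fun x => ?_
    simp [hr, Matrix.mul_assoc]
  have hPu : IsUnit P.det := (Matrix.isUnit_iff_isUnit_det _).mp hP.isUnit
  have h2 : P * (r g).conjTranspose = r g⁻¹ * P := by
    rw [← congrArg (r g⁻¹ * ·) hinv]
    simp only [← Matrix.mul_assoc]
    rw [← hr]
    simp [hr1]
  change (r g⁻¹).trace = star (r g).trace
  rw [← Matrix.trace_conjTranspose]
  calc (r g⁻¹).trace = (r g⁻¹ * P * P⁻¹).trace := by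
        rw [Matrix.mul_nonsing_inv_cancel_right _ _ hPu]
    _ = (P⁻¹ * (P * (r g).conjTranspose)).trace := by rw [← h2, Matrix.trace_mul_comm]
    _ = _ := by rw [Matrix.nonsing_inv_mul_cancel_left _ _ hPu]

theorem cdot_eq {G : Type*} [Group G] [Fintype G] (f h : G → ℂ) :
    cdot G f h = (Nat.card G : ℂ)⁻¹ * ∑ g, f g * starRingEnd ℂ (h g) := by
  rw [cdot, finsum_eq_sum_of_fintype]

theorem cdot_character {G V W : Type*} [Group G] [Finite G] [AddCommGroup V] [Module ℂ V]
    [FiniteDimensional ℂ V] [AddCommGroup W] [Module ℂ W] [FiniteDimensional ℂ W]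
    (ρ : Representation ℂ G V) (σ : Representation ℂ G W) :
    cdot G σ.character ρ.character = Module.finrank ℂ (ρ.IntertwiningMap σ) := by
  have := Fintype.ofFinite G
  have : Invertible (Nat.card G : ℂ) := invertibleOfNonzero (by simp)
  rw [← Representation.card_inv_mul_sum_char_mul_char_eq_finrank, cdot_eq]
  simp [(isChar_character ρ).inv_eq_conj]

theorem IsChar.cdot_eq_natCast {G : Type*} [Group G] [Finite G] {f h : G → ℂ} (hf : IsChar G f)
    (hh : IsChar G h) : ∃ n : ℕ, cdot G f h = n := by
  obtain ⟨n, ρ, rfl⟩ := hf.exists_rep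
  obtain ⟨m, σ, rfl⟩ := hh.exists_rep
  exact ⟨_, cdot_character σ ρ⟩

theorem cdot_self_eq {G : Type*} [Group G] [Fintype G] (f : G → ℂ) :
    cdot G f f = ((Nat.card G : ℝ)⁻¹ * ∑ g, ‖f g‖ ^ 2 : ℝ) := by
  rw [cdot_eq]
  push_cast
  simp [Complex.mul_conj, Complex.normSq_eq_norm_sq]

theorem cdot_self_nonneg {G : Type*} [Group G] [Finite G] (f : G → ℂ) :
    0 ≤ (cdot G f f).re := by
  have := Fintype.ofFinite G
  rw [cdot_self_eq, Complex.ofReal_re]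
  positivity

theorem cdot_self_eq_zero {G : Type*} [Group G] [Finite G] {f : G → ℂ} (h : cdot G f f = 0) :
    f = 0 := by
  have := Fintype.ofFinite G
  rw [cdot_self_eq, Complex.ofReal_eq_zero, mul_eq_zero] at h
  have h2 := h.resolve_left (by simp)
  rw [Finset.sum_eq_zero_iff_of_nonneg (fun _ _ => by positivity)] at h2
  funext g
  simpa using h2 g (Finset.mem_univ g)

theorem cdot_sub_left {G : Type*} [Group G] [Finite G] (f f' h : G → ℂ) :
    cdot G (f - f') h = cdot G f h - cdot G f' h := by
  have := Fintype.ofFinite G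
  simp [cdot_eq, sub_mul, mul_sub]

theorem cdot_conj {G : Type*} [Group G] [Finite G] (f h : G → ℂ) :
    starRingEnd ℂ (cdot G f h) = cdot G h f := by
  have := Fintype.ofFinite G
  simp [cdot_eq, mul_comm]

theorem cdot_sub_right {G : Type*} [Group G] [Finite G] (f h h' : G → ℂ) :
    cdot G f (h - h') = cdot G f h - cdot G f h' := by
  rw [← cdot_conj, cdot_sub_left, map_sub, cdot_conj, cdot_conj]

theorem cdot_mul_left {G : Type*} [Group G] [Finite G] (a f h : G → ℂ) :
    cdot G f (a * h) = cdot G (star a * f) h := by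
  have := Fintype.ofFinite G
  simp only [cdot_eq]
  congr 1
  exact Finset.sum_congr rfl fun g _ => by simp; ring

/-- A character `χ` of norm one equals any function `θ` of nonzero natural norm
whose inner product with `χ` is its own norm. -/
theorem eq_of_cdot_eq_self {G : Type*} [Group G] [Finite G] {χ θ : G → ℂ} (hχ : cdot G χ χ = 1)
    {n : ℕ} (hn : n ≠ 0) (hθ : cdot G θ θ = n) (h : cdot G χ θ = n) : χ = θ ∧ n = 1 := by
  have h' : cdot G θ χ = n := by rw [← cdot_conj, h, map_natCast]
  have hd : cdot G (χ - θ) (χ - θ) = 1 - n := by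
    rw [cdot_sub_left, cdot_sub_right, cdot_sub_right, hχ, h, h', hθ]
    ring
  have h1 : n = 1 := by
    have := cdot_self_nonneg (χ - θ)
    rw [hd] at this
    have : (n : ℝ) ≤ 1 := by simpa using this
    have : n ≤ 1 := by exact_mod_cast this
    omega
  refine ⟨sub_eq_zero.mp (cdot_self_eq_zero ?_), h1⟩
  rw [hd, h1]; simp

theorem card_eq_card_ker_mul {A B : Type*} [Group A] [Group B] {p : A →* B}
    (hp : Function.Surjective p) :
    Nat.card A = Nat.card p.ker * Nat.card B := by
  rw [Subgroup.card_eq_card_quotient_mul_card_subgroup p.ker, mul_comm,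
    Nat.card_congr (QuotientGroup.quotientKerEquivOfSurjective p hp).toEquiv]

/-- The function on `B` averaging `f : A → ℂ` over the fibres of a surjection `p : A →* B`. -/
noncomputable def fiberAvg {A B : Type*} [Group A] [Finite A] [Group B] [Finite B] (p : A →* B)
    (f : A → ℂ) : B → ℂ :=
  fun b => (Nat.card A : ℂ)⁻¹ * Nat.card B * ∑ᶠ a, if p a = b then f a else 0

section FiberAvg

variable {A B : Type*} [Group A] [Finite A] [Group B] [Finite B] {p : A →* B}

theorem cdot_comp_right (p : A →* B) (f : A → ℂ) (h : B → ℂ) :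
    cdot A f (h ∘ p) = cdot B (fiberAvg p f) h := by
  have := Fintype.ofFinite A
  have := Fintype.ofFinite B
  simp only [cdot_eq, fiberAvg, finsum_eq_sum_of_fintype, Finset.sum_mul, Finset.mul_sum]
  rw [Finset.sum_comm]
  refine Finset.sum_congr rfl fun a _ => ?_
  rw [Finset.sum_eq_single (p a) (fun b _ hb => by simp [hb.symm]) (by simp)]
  have : (Nat.card B : ℂ) ≠ 0 := Nat.cast_ne_zero.mpr Nat.card_pos.ne'
  simp only [if_true, Function.comp]
  field_simp

theorem fiberAvg_apply [Fintype p.ker] (hp : Function.Surjective p) (f : A → ℂ) (a : A) :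
    fiberAvg p f (p a) = (Nat.card p.ker : ℂ)⁻¹ * ∑ k : p.ker, f (a * k) := by
  have := Fintype.ofFinite A
  have h : ∑ x, (if p x = p a then f x else 0) = ∑ k : p.ker, f (a * k) := by
    rw [← Equiv.sum_comp (Equiv.mulLeft a), ← Finset.sum_filter]
    exact Finset.sum_subtype _ (by simp [MonoidHom.mem_ker]) _
  have : (Nat.card B : ℂ) ≠ 0 := Nat.cast_ne_zero.mpr Nat.card_pos.ne'
  have : (Nat.card p.ker : ℂ) ≠ 0 := Nat.cast_ne_zero.mpr Nat.card_pos.ne'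
  rw [fiberAvg, finsum_eq_sum_of_fintype, h, card_eq_card_ker_mul hp]
  push_cast
  field_simp

theorem fiberAvg_mul_comp (f : A → ℂ) (h : B → ℂ) :
    fiberAvg p (f * (h ∘ p)) = fiberAvg p f * h := by
  have := Fintype.ofFinite A
  funext b
  simp only [fiberAvg, finsum_eq_sum_of_fintype, Pi.mul_apply, mul_assoc, Finset.sum_mul]
  refine congrArg _ (congrArg _ (Finset.sum_congr rfl fun a _ => ?_))
  split_ifs with hb <;> simp [hb]

theorem fiberAvg_one (hp : Function.Surjective p) : fiberAvg p 1 = 1 := by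
  have := Fintype.ofFinite p.ker
  funext b
  obtain ⟨a, rfl⟩ := hp b
  simp only [fiberAvg_apply hp, Pi.one_apply, Finset.sum_const, Finset.card_univ, nsmul_one,
    Nat.card_eq_fintype_card]
  exact inv_mul_cancel₀ (Nat.cast_ne_zero.mpr Fintype.card_ne_zero)

theorem cdot_comp_comp (hp : Function.Surjective p) (f h : B → ℂ) :
    cdot A (f ∘ p) (h ∘ p) = cdot B f h := by
  rw [cdot_comp_right, ← one_mul (f ∘ p), fiberAvg_mul_comp, fiberAvg_one hp, one_mul]

theorem fiberAvg_snd {C : Type*} [Group C] [Finite C] [Fintype A] (f : A × C → ℂ) (c : C) :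
    fiberAvg (MonoidHom.snd A C) f c = (Nat.card A : ℂ)⁻¹ * ∑ a, f (a, c) := by
  have := Fintype.ofFinite C
  have : (Nat.card C : ℂ) ≠ 0 := Nat.cast_ne_zero.mpr Nat.card_pos.ne'
  simp only [fiberAvg, finsum_eq_sum_of_fintype, Fintype.sum_prod_type, Nat.card_prod]
  have h (a : A) : ∑ x : C, (if MonoidHom.snd A C (a, x) = c then f (a, x) else 0) = f (a, c) :=
    (Finset.sum_eq_single c (fun x _ hx => if_neg hx) (by simp)).trans (if_pos rfl)
  simp only [h]
  push_cast
  field_simp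

open Representation in
/-- The fibre average of a character is the character of the subspace fixed by the kernel. -/
theorem isChar_fiberAvg (hp : Function.Surjective p) {f : A → ℂ} (hf : IsChar A f) :
    IsChar B (fiberAvg p f) := by
  obtain ⟨n, ρ, rfl⟩ := hf.exists_rep
  have := Fintype.ofFinite p.ker
  have : Invertible (Fintype.card p.ker : ℂ) := invertibleOfNonzero (by simp)
  let σ := (quotientToInvariants ρ p.ker).comp
    (QuotientGroup.quotientKerEquivOfSurjective p hp).symm.toMonoidHom
  convert! isChar_character σ
  funext b
  obtain ⟨a, rfl⟩ := hp b
  have hs : σ (p a) = toInvariants ρ p.ker a := by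
    have : (QuotientGroup.quotientKerEquivOfSurjective p hp).symm (p a) = (a : A ⧸ p.ker) := by
      rw [MulEquiv.symm_apply_eq]; rfl
    change quotientToInvariants ρ p.ker
      ((QuotientGroup.quotientKerEquivOfSurjective p hp).symm (p a)) = _
    rw [this]; rfl
  let τ : Representation ℂ p.ker (Fin n → ℂ) := ρ.comp p.ker.subtype
  let e : (Fin n → ℂ) →ₗ[ℂ] invariants τ :=
    τ.averageMap.codRestrict _ τ.averageMap_invariant
  have he : toInvariants ρ p.ker a = e ∘ₗ (ρ a ∘ₗ (invariants τ).subtype) := by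
    ext v
    have : ρ a v ∈ invariants τ := le_comap_invariants ρ p.ker a v.2
    exact congrFun (τ.averageMap_id _ this).symm _
  have he' : (ρ a ∘ₗ (invariants τ).subtype) ∘ₗ e = ρ a ∘ₗ τ.averageMap := rfl
  rw [character, hs, he, LinearMap.trace_comp_comm', he', fiberAvg_apply hp,
    Nat.card_eq_fintype_card]
  simp [averageMap, GroupAlgebra.average, τ, character, map_sum,
    ← Module.End.mul_eq_comp, Finset.mul_sum]

/-- If `χ` is an irreducible character of `A` and `α` a character with `|α|²` of average one on
the fibres of `p`, then `χ` is the product of `α` and the pullback of an irreducible character of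
`B` as soon as the fibre average of `χ * star α` does not vanish. -/
theorem IsIrrChar.eq_mul_fiberAvg (hp : Function.Surjective p) {χ α : A → ℂ}
    (hχ : IsIrrChar A χ) (hα : IsChar A α) (hα1 : fiberAvg p (star α * α) = 1)
    (h0 : fiberAvg p (star α * χ) ≠ 0) :
    χ = α * (fiberAvg p (star α * χ) ∘ p) ∧
      IsIrrChar B (fiberAvg p (star α * χ)) := by
  set u := fiberAvg p (star α * χ) with hu
  have huc : IsChar B u := isChar_fiberAvg hp (hα.conj.mul hχ.1)
  obtain ⟨n, hn⟩ := huc.cdot_eq_natCast huc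
  have hn0 : n ≠ 0 := by
    rintro rfl
    exact h0 (cdot_self_eq_zero (by simpa using hn))
  obtain ⟨h, rfl⟩ := eq_of_cdot_eq_self (θ := α * (u ∘ p)) hχ.2 hn0
    (by rw [cdot_mul_left, ← mul_assoc, cdot_comp_right, fiberAvg_mul_comp, hα1, one_mul, hn])
    (by rw [cdot_mul_left, cdot_comp_right, ← hu, hn])
  exact ⟨h, huc, by simpa using hn⟩

end FiberAvg

theorem finrank_intertwiningMap_ne_zero {G V W : Type*} [Group G] [AddCommGroup V] [Module ℂ V]
    [FiniteDimensional ℂ V] [AddCommGroup W] [Module ℂ W] [FiniteDimensional ℂ W]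
    {ρ : Representation ℂ G V} {σ : Representation ℂ G W} {f : ρ.IntertwiningMap σ} (hf : f ≠ 0) :
    Module.finrank ℂ (ρ.IntertwiningMap σ) ≠ 0 := by
  rw [← (Representation.invariantsEquivIntertwiningMap ρ σ).finrank_eq]
  have : Nontrivial (Representation.linHom ρ σ).invariants :=
    (Representation.invariantsEquivIntertwiningMap ρ σ).toEquiv.nontrivial_congr.mpr ⟨f, 0, hf⟩
  exact Module.finrank_pos.ne'

/-- Every nonzero character has an irreducible constituent. -/
theorem IsChar.exists_constituent {G : Type*} [Group G] [Finite G] {f : G → ℂ} (hf : IsChar G f)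
    (h0 : f ≠ 0) : ∃ α, IsIrrChar G α ∧ cdot G f α ≠ 0 := by
  obtain ⟨n, ρ, rfl⟩ := hf.exists_rep
  have hn : Nontrivial (Fin n → ℂ) := by
    by_contra hn
    rw [not_nontrivial_iff_subsingleton] at hn
    refine h0 (funext fun g => ?_)
    rw [Representation.character, Subsingleton.elim (ρ g) 0, map_zero, Pi.zero_apply]
  have hm : StrictMono (Subrepresentation.toSubmodule (ρ := ρ)) := fun _ _ h => h
  have : WellFoundedLT (Subrepresentation ρ) := hm.wellFoundedLT
  obtain ⟨a, ha, -⟩ := (IsAtomic.eq_bot_or_exists_atom_le (⊤ : Subrepresentation ρ)).resolve_left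
    fun h => top_ne_bot (congrArg Subrepresentation.toSubmodule h)
  have hab : a.toSubmodule ≠ ⊥ := fun h => ha.1 (Subrepresentation.toSubmodule_injective h)
  have : Nontrivial a.toSubmodule := Submodule.nontrivial_iff_ne_bot.mpr hab
  have : a.toRepresentation.IsIrreducible :=
    { exists_pair_ne := ⟨⊥, ⊤, fun h =>
        bot_ne_top (congrArg Subrepresentation.toSubmodule h)⟩
      eq_bot_or_eq_top := fun b => by
        let b' : Subrepresentation ρ :=
          ⟨b.toSubmodule.map a.toSubmodule.subtype, by
            rintro g _ ⟨v, hv, rfl⟩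
            exact ⟨_, b.apply_mem_toSubmodule g hv, rfl⟩⟩
        have hle : b' ≤ a := Submodule.map_subtype_le a.toSubmodule b.toSubmodule
        rcases ha.le_iff.mp hle with h | h
        · left
          apply Subrepresentation.toSubmodule_injective
          have h' : b.toSubmodule.map a.toSubmodule.subtype = ⊥ :=
            congrArg Subrepresentation.toSubmodule h
          exact Submodule.map_injective_of_injective a.toSubmodule.injective_subtype
            (h'.trans (Submodule.map_bot _).symm)
        · right
          apply Subrepresentation.toSubmodule_injective
          have h' : b.toSubmodule.map a.toSubmodule.subtype = a.toSubmodule :=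
            congrArg Subrepresentation.toSubmodule h
          exact Submodule.map_injective_of_injective a.toSubmodule.injective_subtype
            (h'.trans (Submodule.map_subtype_top _).symm) }
  refine ⟨a.toRepresentation.character, ⟨isChar_character _, ?_⟩, ?_⟩
  · rw [cdot_character, Representation.IsIrreducible.finrank_intertwiningMap_self, Nat.cast_one]
  · rw [cdot_character, Nat.cast_ne_zero]
    refine finrank_intertwiningMap_ne_zero
      (f := ⟨a.toSubmodule.subtype, fun _ => rfl⟩) fun h => ?_
    obtain ⟨v, hv⟩ := exists_ne (0 : a.toSubmodule)
    exact hv (Subtype.ext (congrArg (fun F => F.toLinearMap v) h))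

theorem IsIrrChar.comp {A B : Type*} [Group A] [Finite A] [Group B] [Finite B] {f : B → ℂ}
    (hf : IsIrrChar B f) {p : A →* B} (hp : Function.Surjective p) : IsIrrChar A (f ∘ p) :=
  ⟨hf.1.comp p, by rw [cdot_comp_comp hp, hf.2]⟩

theorem isIrrChar_one (G : Type*) [Group G] [Finite G] : IsIrrChar G 1 := by
  have := Fintype.ofFinite G
  exact ⟨isChar_one G, by simp [cdot_eq]⟩

theorem IsIrrChar.ne_zero {G : Type*} [Group G] [Finite G] {f : G → ℂ} (hf : IsIrrChar G f) :
    f ≠ 0 := by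
  rintro rfl
  simpa [cdot] using hf.2

theorem IsChar.eq_zero_of_apply_one {G : Type*} [Group G] {f : G → ℂ} (hf : IsChar G f)
    (h : f 1 = 0) : f = 0 := by
  obtain ⟨n, ρ, rfl⟩ := hf
  have hn : n = 0 := by simpa using h
  subst hn
  funext g
  simp [Matrix.trace]

section Prod

variable {G₁ G₂ : Type*} [Group G₁] [Finite G₁] [Group G₂] [Finite G₂]

/-- The external product of functions on two groups. -/
def extProd (f₁ : G₁ → ℂ) (f₂ : G₂ → ℂ) : G₁ × G₂ → ℂ :=
  (f₁ ∘ MonoidHom.fst G₁ G₂) * (f₂ ∘ MonoidHom.snd G₁ G₂)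

theorem cdot_extProd (f₁ h₁ : G₁ → ℂ) (f₂ h₂ : G₂ → ℂ) :
    cdot (G₁ × G₂) (extProd f₁ f₂) (extProd h₁ h₂) = cdot G₁ f₁ h₁ * cdot G₂ f₂ h₂ := by
  have := Fintype.ofFinite G₁
  have := Fintype.ofFinite G₂
  simp only [cdot_eq, Fintype.sum_prod_type, Nat.card_prod]
  rw [mul_mul_mul_comm, Finset.sum_mul_sum]
  push_cast
  rw [mul_inv]
  refine congrArg _ (Finset.sum_congr rfl fun a _ => Finset.sum_congr rfl fun b _ => ?_)
  simp only [extProd, Pi.mul_apply, Function.comp, MonoidHom.coe_fst, MonoidHom.coe_snd, map_mul]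
  ring

theorem IsIrrChar.extProd {f₁ : G₁ → ℂ} {f₂ : G₂ → ℂ} (h₁ : IsIrrChar G₁ f₁)
    (h₂ : IsIrrChar G₂ f₂) : IsIrrChar (G₁ × G₂) (extProd f₁ f₂) :=
  ⟨(h₁.1.comp _).mul (h₂.1.comp _), by rw [cdot_extProd, h₁.2, h₂.2, one_mul]⟩

theorem IsIrrChar.exists_eq_extProd {χ : G₁ × G₂ → ℂ} (hχ : IsIrrChar (G₁ × G₂) χ) :
    ∃ (χ₁ : G₁ → ℂ) (χ₂ : G₂ → ℂ), IsIrrChar G₁ χ₁ ∧ IsIrrChar G₂ χ₂ ∧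
      χ = _root_.extProd χ₁ χ₂ := by
  have := Fintype.ofFinite G₁
  obtain ⟨α, hα, h0⟩ := (hχ.1.comp (MonoidHom.inl G₁ G₂)).exists_constituent fun h =>
    hχ.ne_zero (hχ.1.eq_zero_of_apply_one (congrFun h 1))
  obtain ⟨h, h'⟩ := hχ.eq_mul_fiberAvg (p := MonoidHom.snd G₁ G₂) Prod.snd_surjective
    (hα.1.comp (MonoidHom.fst G₁ G₂))
    (by
      funext c
      rw [fiberAvg_snd, Pi.one_apply, ← hα.2, cdot_eq]
      exact congrArg _ (Finset.sum_congr rfl fun a _ => mul_comm _ _))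
    (fun h => h0 (by
      have h1 := congrFun h 1
      rw [fiberAvg_snd] at h1
      rw [cdot_eq]
      exact Eq.trans (congrArg _ (Finset.sum_congr rfl fun a _ => mul_comm _ _)) h1))
  exact ⟨α, _, hα, h', h⟩

end Prod

/-- Frobenius reciprocity. -/
theorem cdot_ind {G : Type*} [Group G] [Finite G] (H : Subgroup G) (ψ : H → ℂ) {χ : G → ℂ}
    (hχ : IsChar G χ) : cdot G (ind H ψ) χ = cdot H ψ (χ ∘ H.subtype) := by
  have := Fintype.ofFinite G
  have := Fintype.ofFinite H
  let F : G → ℂ := fun g => if h : g ∈ H then ψ ⟨g, h⟩ else 0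
  have hF : ∑ g, F g * starRingEnd ℂ (χ g) = ∑ h : H, ψ h * starRingEnd ℂ (χ h) := by
    rw [← Finset.sum_subset (Finset.subset_univ (Finset.univ.filter (· ∈ H)))
      (fun g _ hg => by
        have : g ∉ H := by simpa using hg
        simp [F, this]),
      Finset.sum_subtype (p := (· ∈ H)) _ (by simp)]
    exact Finset.sum_congr rfl fun h _ => by simp [F]
  have hx (x : G) : ∑ g, F (x * g * x⁻¹) * starRingEnd ℂ (χ g) =
      ∑ h : H, ψ h * starRingEnd ℂ (χ h) := by
    rw [← hF]
    exact Fintype.sum_equiv (MulAut.conj x).toEquiv _ _ fun g => by simp [hχ.conj_mul_eq]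
  have hG : (Nat.card G : ℂ) ≠ 0 := Nat.cast_ne_zero.mpr Nat.card_pos.ne'
  have hi (g : G) : ind H ψ g = (Nat.card H : ℂ)⁻¹ * ∑ x, F (x * g * x⁻¹) := by
    rw [ind, finsum_eq_sum_of_fintype]
  simp only [cdot_eq, hi, mul_assoc, Finset.sum_mul, ← Finset.mul_sum]
  rw [Finset.sum_comm]
  simp only [mul_assoc] at hx
  simp only [hx, Finset.sum_const, Finset.card_univ, nsmul_eq_mul, ← Nat.card_eq_fintype_card]
  rw [mul_left_comm, inv_mul_cancel_left₀ hG]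
  rfl

section Relative

variable {G : Type*} [Group G] [Finite G] {N : Subgroup G}

/-- `ψ` is an irreducible character of `H ≥ N` that remains irreducible on `N`. -/
def IsIrrOver (N : Subgroup G) {H : Subgroup G} (hNH : N ≤ H) (ψ : H → ℂ) : Prop :=
  IsIrrChar H ψ ∧ IsIrrChar N (resTo hNH ψ)

theorem IsRelAlmostMonomial.exists_separating (h : IsRelAlmostMonomial G N) {χ φ : G → ℂ}
    (hχ : IsIrrChar G χ) (hφ : IsIrrChar G φ) (hne : χ ≠ φ) :
    ∃ (H : Subgroup G) (hNH : N ≤ H) (ψ : H → ℂ), IsIrrOver N hNH ψ ∧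
      cdot H ψ (χ ∘ H.subtype) ≠ 0 ∧ cdot H ψ (φ ∘ H.subtype) = 0 := by
  obtain ⟨H, hNH, ψ, h₁, h₂, h₃, h₄⟩ := h χ φ hχ hφ hne
  rw [cdot_ind _ _ hχ.1] at h₃
  rw [cdot_ind _ _ hφ.1] at h₄
  exact ⟨H, hNH, ψ, ⟨h₁, h₂⟩, h₃, h₄⟩

theorem IsRelAlmostMonomial.exists_constituent (h : IsRelAlmostMonomial G N) {χ : G → ℂ}
    (hχ : IsIrrChar G χ) : ∃ (H : Subgroup G) (hNH : N ≤ H) (ψ : H → ℂ), IsIrrOver N hNH ψ ∧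
      cdot H ψ (χ ∘ H.subtype) ≠ 0 := by
  by_cases h1 : χ = 1
  · refine ⟨⊤, le_top, 1, ⟨isIrrChar_one _, isIrrChar_one _⟩, ?_⟩
    rw [h1]
    exact (isIrrChar_one _).2.trans_ne one_ne_zero
  · obtain ⟨H, hNH, ψ, h₁, h₂, -⟩ := h.exists_separating hχ (isIrrChar_one G) h1
    exact ⟨H, hNH, ψ, h₁, h₂⟩

end Relative

section ProdSubgroup

variable {G₁ G₂ : Type*} [Group G₁] [Finite G₁] [Group G₂] [Finite G₂] {N₁ : Subgroup G₁}
  {N₂ : Subgroup G₂}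

/-- The external product of functions on subgroups, on the product subgroup. -/
def subgroupExtProd {H₁ : Subgroup G₁} {H₂ : Subgroup G₂} (f₁ : H₁ → ℂ) (f₂ : H₂ → ℂ) :
    H₁.prod H₂ → ℂ :=
  extProd f₁ f₂ ∘ (H₁.prodEquiv H₂).toMonoidHom

theorem IsIrrChar.subgroupExtProd {H₁ : Subgroup G₁} {H₂ : Subgroup G₂} {f₁ : H₁ → ℂ}
    {f₂ : H₂ → ℂ} (h₁ : IsIrrChar H₁ f₁) (h₂ : IsIrrChar H₂ f₂) :
    IsIrrChar (H₁.prod H₂) (subgroupExtProd f₁ f₂) :=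
  (h₁.extProd h₂).comp (H₁.prodEquiv H₂).surjective

theorem IsIrrOver.prod {H₁ : Subgroup G₁} {H₂ : Subgroup G₂} {h₁ : N₁ ≤ H₁} {h₂ : N₂ ≤ H₂}
    {ψ₁ : H₁ → ℂ} {ψ₂ : H₂ → ℂ} (hψ₁ : IsIrrOver N₁ h₁ ψ₁) (hψ₂ : IsIrrOver N₂ h₂ ψ₂) :
    IsIrrOver (N₁.prod N₂) (Subgroup.prod_mono h₁ h₂) (subgroupExtProd ψ₁ ψ₂) :=
  ⟨hψ₁.1.subgroupExtProd hψ₂.1, hψ₁.2.subgroupExtProd hψ₂.2⟩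

theorem cdot_subgroupExtProd {H₁ : Subgroup G₁} {H₂ : Subgroup G₂} (ψ₁ : H₁ → ℂ) (ψ₂ : H₂ → ℂ)
    (χ₁ : G₁ → ℂ) (χ₂ : G₂ → ℂ) :
    cdot (H₁.prod H₂) (subgroupExtProd ψ₁ ψ₂) (extProd χ₁ χ₂ ∘ (H₁.prod H₂).subtype) =
      cdot H₁ ψ₁ (χ₁ ∘ H₁.subtype) * cdot H₂ ψ₂ (χ₂ ∘ H₂.subtype) := by
  rw [← cdot_extProd]
  exact cdot_comp_comp (p := (H₁.prodEquiv H₂).toMonoidHom) (H₁.prodEquiv H₂).surjective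
    (extProd ψ₁ ψ₂) (extProd (χ₁ ∘ H₁.subtype) (χ₂ ∘ H₂.subtype))

theorem IsRelAlmostMonomial.prod (hG₁ : IsRelAlmostMonomial G₁ N₁)
    (hG₂ : IsRelAlmostMonomial G₂ N₂) : IsRelAlmostMonomial (G₁ × G₂) (N₁.prod N₂) := by
  intro χ φ hχ hφ hne
  obtain ⟨χ₁, χ₂, hχ₁, hχ₂, rfl⟩ := hχ.exists_eq_extProd
  obtain ⟨φ₁, φ₂, hφ₁, hφ₂, rfl⟩ := hφ.exists_eq_extProd
  suffices ∃ (H₁ : Subgroup G₁) (h₁ : N₁ ≤ H₁) (ψ₁ : H₁ → ℂ) (H₂ : Subgroup G₂) (h₂ : N₂ ≤ H₂)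
      (ψ₂ : H₂ → ℂ), IsIrrOver N₁ h₁ ψ₁ ∧ IsIrrOver N₂ h₂ ψ₂ ∧
      cdot H₁ ψ₁ (χ₁ ∘ H₁.subtype) * cdot H₂ ψ₂ (χ₂ ∘ H₂.subtype) ≠ 0 ∧
      cdot H₁ ψ₁ (φ₁ ∘ H₁.subtype) * cdot H₂ ψ₂ (φ₂ ∘ H₂.subtype) = 0 by
    obtain ⟨H₁, h₁, ψ₁, H₂, h₂, ψ₂, hψ₁, hψ₂, hc, hc'⟩ := this
    refine ⟨H₁.prod H₂, Subgroup.prod_mono h₁ h₂, _root_.subgroupExtProd ψ₁ ψ₂,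
      (hψ₁.prod hψ₂).1, (hψ₁.prod hψ₂).2, ?_, ?_⟩
    · rwa [cdot_ind _ _ hχ.1, cdot_subgroupExtProd]
    · rwa [cdot_ind _ _ hφ.1, cdot_subgroupExtProd]
  by_cases h : χ₁ = φ₁
  · have h' : χ₂ ≠ φ₂ := fun h' => hne (by rw [h, h'])
    obtain ⟨H₁, h₁, ψ₁, hψ₁, hc₁⟩ := hG₁.exists_constituent hχ₁
    obtain ⟨H₂, h₂, ψ₂, hψ₂, hc₂, hc₂'⟩ := hG₂.exists_separating hχ₂ hφ₂ h'
    exact ⟨H₁, h₁, ψ₁, H₂, h₂, ψ₂, hψ₁, hψ₂, mul_ne_zero hc₁ hc₂, by rw [hc₂', mul_zero]⟩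
  · obtain ⟨H₁, h₁, ψ₁, hψ₁, hc₁, hc₁'⟩ := hG₁.exists_separating hχ₁ hφ₁ h
    obtain ⟨H₂, h₂, ψ₂, hψ₂, hc₂⟩ := hG₂.exists_constituent hχ₂
    exact ⟨H₁, h₁, ψ₁, H₂, h₂, ψ₂, hψ₁, hψ₂, mul_ne_zero hc₁ hc₂, by rw [hc₁', zero_mul]⟩

end ProdSubgroup

/-- Relative almost monomiality descends along surjections. -/
theorem IsRelAlmostMonomial.map {A B : Type*} [Group A] [Finite A] [Group B] [Finite B]
    {N : Subgroup A} (h : IsRelAlmostMonomial A N) {p : A →* B} (hp : Function.Surjective p) :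
    IsRelAlmostMonomial B (N.map p) := by
  intro χ φ hχ hφ hne
  obtain ⟨H, hNH, ψ, ⟨hψ, hψN⟩, hc, hc'⟩ := h.exists_separating (hχ.comp hp) (hφ.comp hp)
    fun h => hne (hp.injective_comp_right h)
  let q : H →* H.map p := p.subgroupMap H
  have hq : Function.Surjective q := p.subgroupMap_surjective H
  have hres (f : B → ℂ) : cdot H ψ ((f ∘ p) ∘ H.subtype) =
      cdot (H.map p) (fiberAvg q ψ) (f ∘ (H.map p).subtype) :=
    cdot_comp_right q ψ (f ∘ (H.map p).subtype)
  rw [hres] at hc hc'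
  have h1 : star (1 : H → ℂ) * ψ = ψ := by rw [star_one, one_mul]
  obtain ⟨hψq, hu⟩ := hψ.eq_mul_fiberAvg hq (isChar_one H)
    (by rw [star_one, one_mul, fiberAvg_one hq])
    (by
      rw [h1]
      intro h0
      exact hc (by rw [h0]; simp [cdot]))
  rw [h1, one_mul] at hψq
  rw [h1] at hu
  refine ⟨H.map p, Subgroup.map_mono hNH, fiberAvg q ψ, hu, ⟨?_, ?_⟩, ?_, ?_⟩
  · exact hu.1.comp (Subgroup.inclusion (Subgroup.map_mono hNH))
  · rw [← cdot_comp_comp (p.subgroupMap_surjective N), ← hψN.2]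
    have : resTo (Subgroup.map_mono hNH) (fiberAvg q ψ) ∘ p.subgroupMap N = resTo hNH ψ :=
      funext fun x => (congrFun hψq (Subgroup.inclusion hNH x)).symm
    rw [this]
  · rwa [cdot_ind _ _ hχ.1]
  · rwa [cdot_ind _ _ hφ.1]

theorem stmt10 (G₁ G₂ : Type*) [Group G₁] [Finite G₁] [Group G₂] [Finite G₂]
    (N₁ : Subgroup G₁) (N₂ : Subgroup G₂) [N₁.Normal] [N₂.Normal] :
    (IsRelAlmostMonomial G₁ N₁ ∧ IsRelAlmostMonomial G₂ N₂) ↔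
      IsRelAlmostMonomial (G₁ × G₂) (N₁.prod N₂) := by
  refine ⟨fun h => h.1.prod h.2, fun h => ⟨?_, ?_⟩⟩
  · have h1 : (N₁.prod N₂).map (MonoidHom.fst G₁ G₂) = N₁ := by
      ext x
      simpa [Subgroup.mem_prod] using fun _ => ⟨1, N₂.one_mem⟩
    exact h1 ▸ h.map (p := MonoidHom.fst G₁ G₂) Prod.fst_surjective
  · have h2 : (N₁.prod N₂).map (MonoidHom.snd G₁ G₂) = N₂ := by
      ext x
      simpa [Subgroup.mem_prod] using fun _ => ⟨1, N₁.one_mem⟩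
    exact h2 ▸ h.map (p := MonoidHom.snd G₁ G₂) Prod.snd_surjective
end

section
/- Let A ⊴ G be an abelian normal subgroup of a finite group G. If G is almost monomial, then G is relative almost monomial with respect to A. -/
open scoped Classical

namespace AlmostMonomial

open Module

section Weights

variable {G V : Type*} [Group G] [AddCommGroup V] [Module ℂ V]

/-- The stabiliser of the line spanned by a nonzero vector, with its action on this line. -/
lemma exists_line_stabilizer (ρ : Representation ℂ G V) {w : V} (hw : w ≠ 0) :
    ∃ (L : Subgroup G) (μ : L →* ℂˣ), (∀ g : L, ρ g w = (μ g : ℂ) • w) ∧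
      ∀ (g : G) (c : ℂˣ), ρ g w = (c : ℂ) • w → g ∈ L := by
  let L : Subgroup G :=
    { carrier := {g | ∃ c : ℂˣ, ρ g w = (c : ℂ) • w}
      one_mem' := ⟨1, by simp⟩
      mul_mem' := by
        rintro a b ⟨c, hc⟩ ⟨d, hd⟩
        exact ⟨d * c, by simp [hc, hd, smul_smul]⟩
      inv_mem' := by
        rintro a ⟨c, hc⟩
        refine ⟨c⁻¹, ?_⟩
        have h : ρ a⁻¹ (ρ a w) = w := by simp
        rw [hc, map_smul] at h
        nth_rewrite 2 [← h]
        simp [smul_smul] }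
  choose μ hμ using fun g : L => g.2
  have huniq (g : L) (c : ℂ) (hc : ρ g w = c • w) : (μ g : ℂ) = c :=
    smul_left_injective ℂ hw ((hμ g).symm.trans hc)
  refine ⟨L, ⟨⟨μ, ?_⟩, ?_⟩, hμ, fun g c hc => ⟨c, hc⟩⟩
  · ext
    exact huniq 1 _ (by simp)
  · intro a b
    ext
    refine huniq (a * b) _ ?_
    simp [hμ, smul_smul, mul_comm]

variable [Fintype G]

/-- The unnormalised projection of a representation onto the weight space of a linear character
of a subgroup. -/
noncomputable def weightSum (ρ : Representation ℂ G V) (H : Subgroup G) (l : H →* ℂˣ) :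
    V →ₗ[ℂ] V :=
  ∑ h : H, (l h⁻¹ : ℂ) • ρ h

variable (ρ : Representation ℂ G V) (H : Subgroup G) (l : H →* ℂˣ)

lemma weightSum_apply (v : V) : weightSum ρ H l v = ∑ h : H, (l h⁻¹ : ℂ) • ρ h v := by
  simp [weightSum]

lemma apply_weightSum (h : H) (v : V) :
    ρ h (weightSum ρ H l v) = (l h : ℂ) • weightSum ρ H l v := by
  simp only [weightSum_apply, map_sum, map_smul, Finset.smul_sum]
  refine Fintype.sum_equiv (Equiv.mulLeft h) _ _ fun x => ?_
  simp [smul_smul, mul_comm]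

lemma weightSum_apply_rep (h : H) (v : V) :
    weightSum ρ H l (ρ h v) = (l h : ℂ) • weightSum ρ H l v := by
  simp only [weightSum_apply, Finset.smul_sum]
  refine Fintype.sum_equiv (Equiv.mulRight h) _ _ fun x => ?_
  simp [smul_smul]

lemma weightSum_of_weight {v : V} (hv : ∀ h : H, ρ h v = (l h : ℂ) • v) :
    weightSum ρ H l v = (Fintype.card H : ℂ) • v := by
  simp [weightSum_apply, hv, smul_smul, Nat.cast_smul_eq_nsmul]

/-- A vector of weight `β` is killed by the projection to a different weight `l`. -/
lemma weightSum_eq_zero_of_weight_ne {v : V} {h : H} {c : ℂ} (hv : ρ h v = c • v)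
    (hc : c ≠ l h) : weightSum ρ H l v = 0 := by
  have key := weightSum_apply_rep ρ H l h v
  rw [hv, map_smul, ← sub_eq_zero, ← sub_smul, smul_eq_zero] at key
  exact key.resolve_left (sub_ne_zero.mpr hc)

/-- A nonzero vector has a nonzero component for some linear character of an abelian subgroup. -/
lemma exists_weightSum_ne_zero (hab : ∀ x y : H, x * y = y * x) {v : V} (hv : v ≠ 0) :
    ∃ α : H →* ℂˣ, weightSum ρ H α v ≠ 0 := by
  by_contra! hcon
  let _ : CommGroup H := { (inferInstance : Group H) with mul_comm := hab }
  have hψ (ψ : AddChar (Additive H) ℂ) :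
      ∑ a : H, ψ (Additive.ofMul a⁻¹) • ρ a v = 0 := by
    let f : H →* ℂ :=
      { toFun := fun a => ψ (Additive.ofMul a)
        map_one' := ψ.map_zero_eq_one
        map_mul' := fun a b => ψ.map_add_eq_mul _ _ }
    have := hcon f.toHomUnits
    rwa [weightSum_apply] at this
  have hsum : ∑ ψ : AddChar (Additive H) ℂ, ∑ a : H, ψ (Additive.ofMul a⁻¹) • ρ a v = 0 :=
    Finset.sum_eq_zero fun ψ _ => hψ ψ
  rw [Finset.sum_comm] at hsum
  simp_rw [← Finset.sum_smul, AddChar.sum_apply_eq_ite] at hsum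
  simp [ite_smul, hv] at hsum

end Weights

section Conjugation

variable {G V : Type*} [Group G] [AddCommGroup V] [Module ℂ V]
  (ρ : Representation ℂ G V) (A : Subgroup G) [A.Normal]

lemma rep_mul_conj (k : G) (a : A) (v : V) :
    ρ (MulAut.conjNormal k a : A) (ρ k v) = ρ k (ρ a v) := by
  rw [← Module.End.mul_apply, ← map_mul, ← Module.End.mul_apply, ← map_mul]
  simp

variable [Fintype G] (α : A →* ℂˣ)

/-- Elements fixing `α` commute with the projection to the weight `α`. -/
lemma rep_weightSum_of_fixes {k : G} (hk : ∀ a, α (MulAut.conjNormal k a) = α a) (v : V) :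
    ρ k (weightSum ρ A α v) = weightSum ρ A α (ρ k v) := by
  simp only [weightSum_apply, map_sum, map_smul]
  refine Fintype.sum_equiv (MulAut.conjNormal k).toEquiv _ _ fun a => ?_
  rw [MulEquiv.toEquiv_eq_coe, MulEquiv.coe_toEquiv, rep_mul_conj, ← map_inv, hk]

/-- Elements moving `α` send vectors of weight `α` into the kernel of the projection to `α`. -/
lemma weightSum_rep_of_moves {k : G} (hk : ¬ ∀ a, α (MulAut.conjNormal k a) = α a) {v : V}
    (hv : ∀ a : A, ρ a v = (α a : ℂ) • v) : weightSum ρ A α (ρ k v) = 0 := by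
  push Not at hk
  obtain ⟨a, ha⟩ := hk
  refine weightSum_eq_zero_of_weight_ne ρ A α (h := MulAut.conjNormal k a) (c := α a) ?_ ?_
  · rw [rep_mul_conj, hv, map_smul]
  · exact fun h => ha (Units.ext h.symm)

/-- If `w` has weight `α` for `A`, and weight `l` for the stabiliser of `α` in `K`, then its
projection to the weight `l` of `K` does not vanish. -/
lemma weightSum_ne_zero_of_weight (K : Subgroup G) (l : K →* ℂˣ) {w : V} (hw : w ≠ 0)
    (hA : ∀ a : A, ρ a w = (α a : ℂ) • w)
    (hK : ∀ k : K, (∀ a, α (MulAut.conjNormal (k : G) a) = α a) → ρ k w = (l k : ℂ) • w) :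
    weightSum ρ K l w ≠ 0 := by
  intro h0
  have key : weightSum ρ A α (weightSum ρ K l w) =
      ∑ k : K, if ∀ a, α (MulAut.conjNormal (k : G) a) = α a then
        (Fintype.card A : ℂ) • w else 0 := by
    rw [weightSum_apply ρ K, map_sum]
    refine Finset.sum_congr rfl fun k _ => ?_
    rw [map_smul]
    split_ifs with hk
    · rw [hK k hk, map_smul, weightSum_of_weight ρ A α hA]
      simp
    · rw [weightSum_rep_of_moves ρ A α hk hA, smul_zero]
  rw [h0, map_zero, ← Finset.sum_filter, Finset.sum_const, eq_comm,
    ← Nat.cast_smul_eq_nsmul ℂ, smul_smul, smul_eq_zero] at key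
  refine key.elim (fun h => ?_) hw
  simp only [mul_eq_zero, Nat.cast_eq_zero, Finset.card_eq_zero, Fintype.card_ne_zero,
    or_false] at h
  have h1 : (1 : K) ∈ (∅ : Finset K) := by
    rw [← h]
    simp
  simp at h1

end Conjugation

section Characters

variable {G : Type*} [Group G]

/-- A character is the trace of a representation by linear maps. -/
lemma exists_rep_of_isChar {χ : G → ℂ} (hχ : IsChar G χ) :
    ∃ (n : ℕ) (ρ : Representation ℂ G (Fin n → ℂ)),
      χ = fun g => LinearMap.trace ℂ (Fin n → ℂ) (ρ g) := by
  obtain ⟨n, ρ, rfl⟩ := hχ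
  refine ⟨n, ((Matrix.toLinAlgEquiv' (R := ℂ) (n := Fin n)).toAlgHom.toMonoidHom.comp
    (Units.coeHom _)).comp ρ, ?_⟩
  ext g
  exact (Matrix.trace_toLin'_eq _).symm

variable [Fintype G]

lemma conj_unit_eq (l : G →* ℂˣ) (g : G) : (starRingEnd ℂ) (l g : ℂ) = (l g⁻¹ : ℂ) := by
  have hpow : (l g : ℂ) ^ Fintype.card G = 1 := by
    rw [← Units.val_pow_eq_pow_val, ← map_pow, pow_card_eq_one, map_one, Units.val_one]
  have hn : ‖(l g : ℂ)‖ = 1 := Complex.norm_eq_one_of_pow_eq_one hpow Fintype.card_ne_zero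
  rw [map_inv, Units.val_inv_eq_inv_val, Complex.inv_eq_conj hn]

lemma isIrrChar_of_hom (l : G →* ℂˣ) : IsIrrChar G fun g => (l g : ℂ) := by
  refine ⟨⟨1, (Units.map (Matrix.scalar (Fin 1)).toMonoidHom).comp l, ?_⟩, ?_⟩
  · ext g
    simp [Matrix.trace]
  · simp only [cdot, conj_unit_eq, ← Units.val_mul, ← map_mul, mul_inv_cancel, map_one,
      Units.val_one, finsum_eq_sum_of_fintype]
    simp

/-- Frobenius reciprocity for a class function on `G`. -/
lemma cdot_ind (H : Subgroup G) (f : H → ℂ) (χ : G → ℂ) (hχ : ∀ x g, χ (x * g * x⁻¹) = χ g) :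
    cdot G (ind H f) χ =
      (Fintype.card H : ℂ)⁻¹ * ∑ h : H, f h * (starRingEnd ℂ) (χ h) := by
  have hinner (x : G) : ∑ g : G, (if h : x * g * x⁻¹ ∈ H then f ⟨x * g * x⁻¹, h⟩ else 0) *
      (starRingEnd ℂ) (χ g) = ∑ h : H, f h * (starRingEnd ℂ) (χ h) := by
    let F : G → ℂ := fun g => (if h : g ∈ H then f ⟨g, h⟩ else 0) * (starRingEnd ℂ) (χ g)
    calc
      _ = ∑ g, F g :=
        Fintype.sum_equiv (MulAut.conj x).toEquiv _ _ fun g => by simp [F, hχ]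
      _ = ∑ g with g ∈ H, F g :=
        (Finset.sum_filter_of_ne fun g _ hg => by
          by_contra hgH
          simp [F, hgH] at hg).symm
      _ = ∑ h : H, F h := Finset.sum_subtype _ (by simp) _
      _ = _ := by simp [F]
  simp only [cdot, ind, finsum_eq_sum_of_fintype, mul_assoc (Nat.card H : ℂ)⁻¹,
    ← Finset.mul_sum, Finset.sum_mul]
  rw [Finset.sum_comm]
  simp only [hinner, Finset.sum_const, Finset.card_univ, nsmul_eq_mul, Nat.card_eq_fintype_card]
  rw [mul_left_comm, inv_mul_cancel_left₀ (Nat.cast_ne_zero.mpr Fintype.card_ne_zero)]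

/-- A linear character of `H` induces to a character having a common constituent with the
character of `ρ` iff `ρ` has a vector of that weight. -/
lemma cdot_ind_trace_ne_zero_iff {V : Type*} [AddCommGroup V] [Module ℂ V]
    [FiniteDimensional ℂ V] (ρ : Representation ℂ G V) (H : Subgroup G) (l : H →* ℂˣ) :
    cdot G (ind H fun h => (l h : ℂ)) (fun g => LinearMap.trace ℂ V (ρ g)) ≠ 0 ↔
      ∃ v ≠ 0, ∀ h : H, ρ h v = (l h : ℂ) • v := by
  let W : Submodule ℂ V :=
    { carrier := {v | ∀ h : H, ρ h v = (l h : ℂ) • v}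
      zero_mem' := by simp
      add_mem' := fun ha hb h => by rw [map_add, ha h, hb h, smul_add]
      smul_mem' := fun c v hv h => by rw [map_smul, hv h, smul_comm] }
  have hproj : LinearMap.IsProj W ((Fintype.card H : ℂ)⁻¹ • weightSum ρ H l) := by
    refine ⟨fun v => W.smul_mem _ fun h => apply_weightSum ρ H l h v, fun v hv => ?_⟩
    rw [LinearMap.smul_apply, weightSum_of_weight ρ H l hv, smul_smul, inv_mul_cancel₀, one_smul]
    simp
  have htrace : cdot G (ind H fun h => (l h : ℂ)) (fun g => LinearMap.trace ℂ V (ρ g)) =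
      (finrank ℂ W : ℂ) := by
    have hclass (x g : G) : LinearMap.trace ℂ V (ρ (x * g * x⁻¹)) = LinearMap.trace ℂ V (ρ g) := by
      rw [map_mul, LinearMap.trace_mul_comm, ← map_mul, ← mul_assoc, inv_mul_cancel,
        one_mul]
    have hconj : (finrank ℂ W : ℂ) = (starRingEnd ℂ)
        (LinearMap.trace ℂ V ((Fintype.card H : ℂ)⁻¹ • weightSum ρ H l)) := by
      rw [hproj.trace, Complex.conj_natCast]
    rw [cdot_ind H _ _ hclass, hconj]
    simp only [weightSum, map_smul, map_sum, smul_eq_mul, map_mul, map_inv₀, Complex.conj_natCast,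
      conj_unit_eq, inv_inv]
  rw [htrace, Nat.cast_ne_zero, ne_eq, Submodule.finrank_eq_zero, ← ne_eq, Submodule.ne_bot_iff]
  exact ⟨fun ⟨v, hv, h0⟩ => ⟨v, h0, hv⟩, fun ⟨v, h0, hv⟩ => ⟨v, hv, h0⟩⟩

end Characters

end AlmostMonomial

open AlmostMonomial in
theorem stmt15 (G : Type*) [Group G] [Finite G] (A : Subgroup G) [A.Normal]
    (hab : ∀ x y : A, x * y = y * x) (h : IsAlmostMonomial G) :
    IsRelAlmostMonomial G A := by
  have := Fintype.ofFinite G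
  intro χ φ hχ hφ hne
  obtain ⟨K, _, ⟨l, rfl⟩, hKχ, hKφ⟩ := h χ φ hχ hφ hne
  obtain ⟨n, ρ, rfl⟩ := exists_rep_of_isChar hχ.1
  obtain ⟨m, σ, rfl⟩ := exists_rep_of_isChar hφ.1
  obtain ⟨v, hv0, hv⟩ := (cdot_ind_trace_ne_zero_iff ρ K l).mp hKχ
  obtain ⟨α, hw⟩ := exists_weightSum_ne_zero ρ A hab hv0
  obtain ⟨L, μ, hμ, hL⟩ := exists_line_stabilizer ρ hw
  have hμ_eq (g : L) (c : ℂ)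
      (hc : ρ g (weightSum ρ A α v) = c • weightSum ρ A α v) : (μ g : ℂ) = c :=
    smul_left_injective ℂ hw ((hμ g).symm.trans hc)
  have hA (a : A) := apply_weightSum ρ A α a v
  have hK (k : K) (hk : ∀ a, α (MulAut.conjNormal (k : G) a) = α a) :
      ρ k (weightSum ρ A α v) = (l k : ℂ) • weightSum ρ A α v := by
    rw [rep_weightSum_of_fixes ρ A α hk, hv, map_smul]
  have hAL : A ≤ L := fun a ha => hL a _ (hA ⟨a, ha⟩)
  refine ⟨L, hAL, fun g => (μ g : ℂ), isIrrChar_of_hom μ,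
    isIrrChar_of_hom (μ.comp (Subgroup.inclusion hAL)),
    (cdot_ind_trace_ne_zero_iff ρ L μ).mpr ⟨_, hw, hμ⟩, ?_⟩
  by_contra hcon
  obtain ⟨w, hw0, hwL⟩ := (cdot_ind_trace_ne_zero_iff σ L μ).mp hcon
  refine (cdot_ind_trace_ne_zero_iff σ K l).mpr ⟨weightSum σ K l w, ?_,
    fun k => apply_weightSum σ K l k w⟩ hKφ
  refine weightSum_ne_zero_of_weight σ A α K l hw0 (fun a => ?_) fun k hk => ?_
  · rw [← hμ_eq ⟨a, hAL a.2⟩ _ (hA a)]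
    exact hwL ⟨a, hAL a.2⟩
  · have hkL : (k : G) ∈ L := hL k _ (hK k hk)
    rw [← hμ_eq ⟨k, hkL⟩ _ (hK k hk)]
    exact hwL ⟨k, hkL⟩
end
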